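/- Let A = kQ/I be a gentle algebra. Then the number of isomorphism classes of indecomposable non-projective Gorenstein projective A-modules equals the number of arrows of Q lying on oriented cycles with full relations. Equivalently, in terms of the AG-invariant φ_A, it equals the sum over ℓ ≥ 1 of ℓ·φ_A(0, ℓ). -/

import Mathlib

open MulOpposite DirectSum

set_option autoImplicit false

/-- The combinatorial data of a finite quiver together with a set of
length-two relations (`rel a b` means that the length-two path `a·b` lies in
the admissible ideal `I`). -/
structure GentleData : Type 1 where
  V : Type
  A : Type
  [fintypeV : Fintype V]
  [fintypeA : Fintype A]
  [decEqV : DecidableEq V]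
  [decEqA : DecidableEq A]
  src : A → V
  tgt : A → V
  rel : A → A → Prop

attribute [instance] GentleData.fintypeV GentleData.fintypeA GentleData.decEqV GentleData.decEqA

/-- The gentleness conditions on a bound quiver `(Q, I)`:
relations are composable length-two paths; at most two arrows start
(resp. end) at every vertex; for every arrow `β` there is at most one arrow `α`
with `αβ ∉ I` and at most one with `αβ ∈ I`, and dually; and there is a bound
on the length of paths avoiding relations (admissibility). -/
def IsGentle (Q : GentleData) : Prop :=
  (∀ a b, Q.rel a b → Q.tgt a = Q.src b) ∧
  (∀ v : Q.V, Set.ncard {a : Q.A | Q.src a = v} ≤ 2) ∧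
  (∀ v : Q.V, Set.ncard {a : Q.A | Q.tgt a = v} ≤ 2) ∧
  (∀ b : Q.A, Set.ncard {a : Q.A | Q.tgt a = Q.src b ∧ ¬ Q.rel a b} ≤ 1) ∧
  (∀ b : Q.A, Set.ncard {a : Q.A | Q.tgt a = Q.src b ∧ Q.rel a b} ≤ 1) ∧
  (∀ a : Q.A, Set.ncard {b : Q.A | Q.src b = Q.tgt a ∧ ¬ Q.rel a b} ≤ 1) ∧
  (∀ a : Q.A, Set.ncard {b : Q.A | Q.src b = Q.tgt a ∧ Q.rel a b} ≤ 1) ∧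
  (∃ N : ℕ, ∀ p : ℕ → Q.A, ¬ ∀ i, i < N → (Q.tgt (p i) = Q.src (p (i+1)) ∧ ¬ Q.rel (p i) (p (i+1))))

/-- Generators of the path algebra: one generator for each vertex (the
corresponding trivial path) and one for each arrow. -/
inductive GenSym (Q : GentleData) : Type
  | vertex : Q.V → GenSym Q
  | arrow : Q.A → GenSym Q

/-- The defining relations of the algebra `kQ/I`: the trivial paths are
orthogonal idempotents summing to `1`, arrows are compatible with the trivial
paths at their source and target, and the chosen length-two paths vanish. -/
inductive GentleRel (k : Type) [Field k] (Q : GentleData) :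
    FreeAlgebra k (GenSym Q) → FreeAlgebra k (GenSym Q) → Prop
  | idem (v : Q.V) : GentleRel k Q
      (FreeAlgebra.ι k (GenSym.vertex v) * FreeAlgebra.ι k (GenSym.vertex v))
      (FreeAlgebra.ι k (GenSym.vertex v))
  | orth (v w : Q.V) (h : v ≠ w) : GentleRel k Q
      (FreeAlgebra.ι k (GenSym.vertex v) * FreeAlgebra.ι k (GenSym.vertex w)) 0
  | sum_idem : GentleRel k Q (∑ v : Q.V, FreeAlgebra.ι k (GenSym.vertex v)) 1
  | src_mul (a : Q.A) : GentleRel k Q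
      (FreeAlgebra.ι k (GenSym.vertex (Q.src a)) * FreeAlgebra.ι k (GenSym.arrow a))
      (FreeAlgebra.ι k (GenSym.arrow a))
  | mul_tgt (a : Q.A) : GentleRel k Q
      (FreeAlgebra.ι k (GenSym.arrow a) * FreeAlgebra.ι k (GenSym.vertex (Q.tgt a)))
      (FreeAlgebra.ι k (GenSym.arrow a))
  | relation (a b : Q.A) (h : Q.rel a b) : GentleRel k Q
      (FreeAlgebra.ι k (GenSym.arrow a) * FreeAlgebra.ι k (GenSym.arrow b)) 0

/-- The algebra `A = kQ/I` presented by the bound quiver `Q`. -/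
abbrev GentleAlgebra (k : Type) [Field k] (Q : GentleData) : Type :=
  RingQuot (GentleRel k Q)

/-- The image in `kQ/I` of a generator. -/
noncomputable def ofGen (k : Type) [Field k] (Q : GentleData) (x : GenSym Q) :
    GentleAlgebra k Q :=
  RingQuot.mkAlgHom k (GentleRel k Q) (FreeAlgebra.ι k x)

/-- The idempotent `e_v ∈ kQ/I` of a vertex `v`. -/
noncomputable def idemOf (k : Type) [Field k] (Q : GentleData) (v : Q.V) :
    GentleAlgebra k Q :=
  ofGen k Q (GenSym.vertex v)

/-- The element of `kQ/I` given by an arrow `a`. -/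
noncomputable def arrOf (k : Type) [Field k] (Q : GentleData) (a : Q.A) :
    GentleAlgebra k Q :=
  ofGen k Q (GenSym.arrow a)

/-- The indecomposable projective right module `e_v A`, as a right submodule
(i.e. `Aᵐᵒᵖ`-submodule) of `A`. -/
noncomputable def vertexModule (k : Type) [Field k] (Q : GentleData) (v : Q.V) :
    Submodule (GentleAlgebra k Q)ᵐᵒᵖ (GentleAlgebra k Q) :=
  Submodule.span (GentleAlgebra k Q)ᵐᵒᵖ {idemOf k Q v}

/-- The right module `αA` generated by an arrow `α`, as a right submodule of `A`. -/
noncomputable def arrowModule (k : Type) [Field k] (Q : GentleData) (a : Q.A) :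
    Submodule (GentleAlgebra k Q)ᵐᵒᵖ (GentleAlgebra k Q) :=
  Submodule.span (GentleAlgebra k Q)ᵐᵒᵖ {arrOf k Q a}

/-- An oriented cycle `c` of length `ℓ` with full relations:
`t(cᵢ) = s(cᵢ₊₁)` and `cᵢ cᵢ₊₁ ∈ I` for all `i` (indices modulo `ℓ`). -/
def IsOCFCycle (Q : GentleData) {ℓ : ℕ} (c : ZMod ℓ → Q.A) : Prop :=
  ∀ i : ZMod ℓ, Q.tgt (c i) = Q.src (c (i + 1)) ∧ Q.rel (c i) (c (i + 1))

/-- The arrow `a` lies on some oriented cycle with full relations. -/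
def OnOCFCycle (Q : GentleData) (a : Q.A) : Prop :=
  ∃ ℓ : ℕ, 1 ≤ ℓ ∧ ∃ c : ZMod ℓ → Q.A, IsOCFCycle Q c ∧ ∃ i : ZMod ℓ, c i = a

/-- The whole quiver `(Q, I)` is an oriented cycle of some length `ℓ ≥ 1` with
full relations. -/
def QuiverIsOCF (Q : GentleData) : Prop :=
  ∃ ℓ : ℕ, 1 ≤ ℓ ∧ ∃ (e : Q.V ≃ ZMod ℓ) (f : Q.A ≃ ZMod ℓ),
    (∀ a, e (Q.src a) = f a) ∧ (∀ a, e (Q.tgt a) = f a + 1) ∧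
    (∀ a b, Q.rel a b ↔ f b = f a + 1)

/-- The quiver `(Q, I)` is a single point: exactly one vertex and no arrows. -/
def QuiverIsPoint (Q : GentleData) : Prop :=
  (∃ v : Q.V, ∀ w : Q.V, w = v) ∧ IsEmpty Q.A

/-- `v` is a common vertex of two distinct oriented cycles with full relations. -/
def TwoCyclesAt (Q : GentleData) (v : Q.V) : Prop :=
  ∃ (ℓ ℓ' : ℕ), 1 ≤ ℓ ∧ 1 ≤ ℓ' ∧ ∃ (c : ZMod ℓ → Q.A) (c' : ZMod ℓ' → Q.A),
    IsOCFCycle Q c ∧ IsOCFCycle Q c' ∧ Function.Injective c ∧ Function.Injective c' ∧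
    (∃ i, Q.tgt (c i) = v) ∧ (∃ j, Q.tgt (c' j) = v) ∧ Set.range c ≠ Set.range c'

/-- The set of vertices lying on an oriented cycle with full relations. -/
def ocfVertexSet (Q : GentleData) : Set Q.V :=
  {v | ∃ a : Q.A, OnOCFCycle Q a ∧ Q.tgt a = v}

/-- Oriented cycles with full relations, identified up to cyclic rotation. -/
def ocfCycleSetoid (Q : GentleData) (ℓ : ℕ) :
    Setoid {c : ZMod ℓ → Q.A // IsOCFCycle Q c ∧ Function.Injective c} where
  r c c' := ∃ t : ZMod ℓ, ∀ i, c'.1 i = c.1 (i + t)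
  iseqv := by
    refine ⟨fun c => ⟨0, fun i => by rw [add_zero]⟩, ?_, ?_⟩
    · rintro c c' ⟨t, ht⟩
      exact ⟨-t, fun i => by rw [ht (i + -t), neg_add_cancel_right]⟩
    · rintro a b c ⟨t, ht⟩ ⟨s, hs⟩
      exact ⟨s + t, fun i => by rw [hs i, ht (i + s), add_assoc]⟩

/-- `AGzero Q ℓ` is the value `φ_A(0, ℓ)` of the AG-invariant: the number of
oriented cycles of length `ℓ` with full relations, counted up to rotation. -/
noncomputable def AGzero (Q : GentleData) (ℓ : ℕ) : ℕ :=
  Nat.card (Quotient (ocfCycleSetoid Q ℓ))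

/-- A (nontrivial) forbidden path with arrows `p 0, …, p (m-1)`:
all consecutive length-two subpaths lie in `I`. -/
def IsForbiddenPath (Q : GentleData) (m : ℕ) (p : ℕ → Q.A) : Prop :=
  ∀ i : ℕ, i + 1 < m → Q.tgt (p i) = Q.src (p (i + 1)) ∧ Q.rel (p i) (p (i + 1))

/-- A (nontrivial) forbidden thread: a maximal forbidden path (of `m ≥ 1`
arrows), i.e. one which cannot be extended on either side. -/
def IsForbiddenThread (Q : GentleData) (m : ℕ) (p : ℕ → Q.A) : Prop :=
  1 ≤ m ∧ IsForbiddenPath Q m p ∧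
  (∀ b : Q.A, Q.tgt b = Q.src (p 0) → ¬ Q.rel b (p 0)) ∧
  (∀ b : Q.A, Q.src b = Q.tgt (p (m - 1)) → ¬ Q.rel (p (m - 1)) b)

/-- A trivial forbidden thread at a vertex `v` (of length `0`). -/
def IsTrivialForbiddenThread (Q : GentleData) (v : Q.V) : Prop :=
  ({a : Q.A | Q.tgt a = v} = ∅) ∨ ({a : Q.A | Q.src a = v} = ∅) ∨
  (∃ b b' : Q.A, {a : Q.A | Q.tgt a = v} = {b} ∧ {a : Q.A | Q.src a = v} = {b'} ∧ ¬ Q.rel b b')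

/-- The set of lengths of the forbidden threads of finite length. -/
def finiteForbiddenThreadLengths (Q : GentleData) : Set ℕ∞ :=
  {n : ℕ∞ | (n = 0 ∧ ∃ v : Q.V, IsTrivialForbiddenThread Q v) ∨
    (∃ m : ℕ, n = (m : ℕ∞) ∧ ∃ p : ℕ → Q.A, IsForbiddenThread Q m p)}

/-- The set of lengths of all forbidden threads; an oriented cycle with full
relations gives rise to a forbidden thread of infinite length. -/
def forbiddenThreadLengths (Q : GentleData) : Set ℕ∞ :=
  finiteForbiddenThreadLengths Q ∪
    {n : ℕ∞ | n = ⊤ ∧ ∃ ℓ : ℕ, 1 ≤ ℓ ∧ ∃ c : ZMod ℓ → Q.A, IsOCFCycle Q c}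

section Dimensions

/-- `projDimLE R n M` : the `R`-module `M` admits a projective resolution of
length at most `n`. -/
def projDimLE (R : Type) [Ring R] (n : ℕ) (M : Type) [AddCommGroup M] [Module R M] : Prop :=
  ∃ (P : ℕ → ModuleCat.{0} R) (d : ∀ i : ℕ, ↥(P (i + 1)) →ₗ[R] ↥(P i)) (ε : ↥(P 0) →ₗ[R] M),
    (∀ i, Module.Projective R ↥(P i)) ∧
    Function.Surjective ε ∧ Function.Exact (d 0) ε ∧
    (∀ i, Function.Exact (d (i + 1)) (d i)) ∧
    (∀ i, n ≤ i → Subsingleton ↥(P (i + 1)))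

/-- `injDimLE R n M` : the `R`-module `M` admits an injective coresolution of
length at most `n`. -/
def injDimLE (R : Type) [Ring R] (n : ℕ) (M : Type) [AddCommGroup M] [Module R M] : Prop :=
  ∃ (E : ℕ → ModuleCat.{0} R) (d : ∀ i : ℕ, ↥(E i) →ₗ[R] ↥(E (i + 1))) (ι : M →ₗ[R] ↥(E 0)),
    (∀ i, Module.Injective R ↥(E i)) ∧
    Function.Injective ι ∧ Function.Exact ι (d 0) ∧
    (∀ i, Function.Exact (d i) (d (i + 1))) ∧
    (∀ i, n ≤ i → Subsingleton ↥(E (i + 1)))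

/-- The projective dimension of a module, in `ℕ∞`. -/
noncomputable def projDim (R : Type) [Ring R] (M : Type) [AddCommGroup M] [Module R M] : ℕ∞ :=
  sInf {n : ℕ∞ | ∃ m : ℕ, n = (m : ℕ∞) ∧ projDimLE R m M}

/-- The injective dimension of a module, in `ℕ∞`. -/
noncomputable def injDim (R : Type) [Ring R] (M : Type) [AddCommGroup M] [Module R M] : ℕ∞ :=
  sInf {n : ℕ∞ | ∃ m : ℕ, n = (m : ℕ∞) ∧ injDimLE R m M}

/-- The global dimension of a ring: the supremum of the projective dimensions
of all finitely generated modules. -/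
noncomputable def globalDim (R : Type) [Ring R] : ℕ∞ :=
  ⨆ (M : ModuleCat.{0} R) (_ : Module.Finite R ↥M), projDim R ↥M

/-- The left self-injective dimension: the injective dimension of `R` as a
left module over itself. -/
noncomputable def leftSelfInjDim (R : Type) [Ring R] : ℕ∞ := injDim R R

/-- The right self-injective dimension: the injective dimension of `R` as a
right module over itself. -/
noncomputable def rightSelfInjDim (R : Type) [Ring R] : ℕ∞ := injDim Rᵐᵒᵖ R

end Dimensions

section Radical

/-- The radical of a module: the intersection of its maximal submodules. -/
def radMod (R : Type) [Ring R] (M : Type) [AddCommGroup M] [Module R M] : Submodule R M :=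
  sInf {N : Submodule R M | IsCoatom N}

/-- The top of a module: the quotient by its radical. -/
abbrev topMod (R : Type) [Ring R] (M : Type) [AddCommGroup M] [Module R M] : Type :=
  M ⧸ radMod R M

/-- The socle of a module: the sum of its simple submodules. -/
def socMod (R : Type) [Ring R] (M : Type) [AddCommGroup M] [Module R M] : Submodule R M :=
  sSup {N : Submodule R M | IsAtom N}

/-- The simple right `A`-module `S(v)` at a vertex `v`, realized as the top of
the indecomposable projective `e_v A`. -/
noncomputable abbrev SimpleAt (k : Type) [Field k] (Q : GentleData) (v : Q.V) : Type :=
  topMod (GentleAlgebra k Q)ᵐᵒᵖ ↥(vertexModule k Q v)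

end Radical

section Gorenstein

/-- An indecomposable module: nontrivial, and admitting no nontrivial direct
sum decomposition. -/
def IndecomposableModule (R : Type) [Ring R] (M : Type) [AddCommGroup M] [Module R M] : Prop :=
  Nontrivial M ∧ ∀ N N' : Submodule R M, IsCompl N N' → N = ⊥ ∨ N' = ⊥

/-- A Gorenstein projective module: a syzygy of an acyclic complex of
projective modules which remains acyclic after applying `Hom(−, R)`. -/
def IsGorensteinProjective (R : Type) [Ring R] (G : Type) [AddCommGroup G] [Module R G] :
    Prop :=
  ∃ (P : ℤ → ModuleCat.{0} R) (d : ∀ n : ℤ, ↥(P n) →ₗ[R] ↥(P (n + 1))),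
    (∀ n, Module.Projective R ↥(P n)) ∧
    (∀ n, Function.Exact (d n) (d (n + 1))) ∧
    (∀ n : ℤ, Function.Exact
      (fun g : ↥(P (n + 1 + 1)) →ₗ[R] R => g ∘ₗ d (n + 1))
      (fun g : ↥(P (n + 1)) →ₗ[R] R => g ∘ₗ d n)) ∧
    Nonempty (G ≃ₗ[R] ↥(LinearMap.range (d (-1))))

/-- An indecomposable non-projective Gorenstein projective module. -/
def IsIndecNonProjGP (R : Type) [Ring R] (M : Type) [AddCommGroup M] [Module R M] : Prop :=
  IndecomposableModule R M ∧ IsGorensteinProjective R M ∧ ¬ Module.Projective R M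

/-- An indecomposable Gorenstein projective module. -/
def IsIndecGP (R : Type) [Ring R] (M : Type) [AddCommGroup M] [Module R M] : Prop :=
  IndecomposableModule R M ∧ IsGorensteinProjective R M

/-- Indecomposable non-projective Gorenstein projective right `A`-modules
(realized as right submodules of `A`), up to isomorphism. -/
noncomputable def npgpSetoid (k : Type) [Field k] (Q : GentleData) :
    Setoid {N : Submodule (GentleAlgebra k Q)ᵐᵒᵖ (GentleAlgebra k Q) //
      IsIndecNonProjGP (GentleAlgebra k Q)ᵐᵒᵖ ↥N} where
  r N N' := Nonempty (↥N.1 ≃ₗ[(GentleAlgebra k Q)ᵐᵒᵖ] ↥N'.1)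
  iseqv := ⟨fun _ => ⟨LinearEquiv.refl _ _⟩, fun ⟨e⟩ => ⟨e.symm⟩, fun ⟨e⟩ ⟨f⟩ => ⟨e.trans f⟩⟩

/-- The number of isomorphism classes of indecomposable non-projective
Gorenstein projective right `A`-modules. -/
noncomputable def numIndecNonProjGP (k : Type) [Field k] (Q : GentleData) : ℕ :=
  Nat.card (Quotient (npgpSetoid k Q))

/-- Indecomposable Gorenstein projective right `A`-modules (realized as right
submodules of `A`), up to isomorphism. -/
noncomputable def gpSetoid (k : Type) [Field k] (Q : GentleData) :
    Setoid {N : Submodule (GentleAlgebra k Q)ᵐᵒᵖ (GentleAlgebra k Q) //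
      IsIndecGP (GentleAlgebra k Q)ᵐᵒᵖ ↥N} where
  r N N' := Nonempty (↥N.1 ≃ₗ[(GentleAlgebra k Q)ᵐᵒᵖ] ↥N'.1)
  iseqv := ⟨fun _ => ⟨LinearEquiv.refl _ _⟩, fun ⟨e⟩ => ⟨e.symm⟩, fun ⟨e⟩ ⟨f⟩ => ⟨e.trans f⟩⟩

end Gorenstein

section Strings

/-- A walk in the quiver: `len` letters, the `i`-th letter (for `1 ≤ i ≤ len`)
joining the vertex `vtx (i-1)` to `vtx i`; a letter `(a, true)` is the arrow
`a` read forwards (direct), and `(a, false)` is its formal inverse. -/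
structure StrWalk (Q : GentleData) : Type where
  len : ℕ
  vtx : ℕ → Q.V
  letter : ℕ → Q.A × Bool

/-- The walk is a string: letters join consecutive vertices, the walk is
reduced (no `a a⁻` nor `a⁻ a`), and it avoids the relations. -/
def IsString (Q : GentleData) (w : StrWalk Q) : Prop :=
  (∀ i : ℕ, 1 ≤ i → i ≤ w.len →
    ((w.letter i).2 = true →
      Q.src (w.letter i).1 = w.vtx (i - 1) ∧ Q.tgt (w.letter i).1 = w.vtx i) ∧
    ((w.letter i).2 = false →
      Q.tgt (w.letter i).1 = w.vtx (i - 1) ∧ Q.src (w.letter i).1 = w.vtx i)) ∧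
  (∀ i : ℕ, 1 ≤ i → i + 1 ≤ w.len →
    (¬ ((w.letter i).1 = (w.letter (i + 1)).1 ∧ (w.letter i).2 ≠ (w.letter (i + 1)).2)) ∧
    ((w.letter i).2 = true → (w.letter (i + 1)).2 = true →
      ¬ Q.rel (w.letter i).1 (w.letter (i + 1)).1) ∧
    ((w.letter i).2 = false → (w.letter (i + 1)).2 = false →
      ¬ Q.rel (w.letter (i + 1)).1 (w.letter i).1))

/-- `M` is the string module `M(w)` of the string `w`: it has a `k`-basis
indexed by the vertices `0, …, len` of the walk, the idempotent of a vertex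
fixes exactly the basis vectors sitting at that vertex, and an arrow moves
basis vectors along the corresponding letters of the walk. -/
def IsStringModule (k : Type) [Field k] (Q : GentleData) (w : StrWalk Q) (M : Type)
    [AddCommGroup M] [Module k M] [Module (GentleAlgebra k Q)ᵐᵒᵖ M] : Prop :=
  (∀ (c : k) (m : M), (algebraMap k (GentleAlgebra k Q)ᵐᵒᵖ c) • m = c • m) ∧
  ∃ b : ℕ → M,
    LinearIndependent k (fun i : Fin (w.len + 1) => b i) ∧
    Submodule.span k (b '' {i : ℕ | i ≤ w.len}) = ⊤ ∧
    (∀ i : ℕ, i ≤ w.len → ∀ v : Q.V,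
      (op (idemOf k Q v)) • b i = if w.vtx i = v then b i else 0) ∧
    (∀ i : ℕ, i ≤ w.len → ∀ a : Q.A,
      (op (arrOf k Q a)) • b i =
        (if i + 1 ≤ w.len ∧ w.letter (i + 1) = (a, true) then b (i + 1) else 0) +
        (if 1 ≤ i ∧ w.letter i = (a, false) then b (i - 1) else 0))

/-- The vertex at position `i` is a source of the walk: the adjacent letters
point away from it. -/
def sourceAt (Q : GentleData) (w : StrWalk Q) (i : ℕ) : Prop :=
  i ≤ w.len ∧ (i = 0 ∨ (w.letter i).2 = false) ∧ (i = w.len ∨ (w.letter (i + 1)).2 = true)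

/-- The vertex at position `i` is a sink of the walk: the adjacent letters
point towards it. -/
def sinkAt (Q : GentleData) (w : StrWalk Q) (i : ℕ) : Prop :=
  i ≤ w.len ∧ (i = 0 ∨ (w.letter i).2 = true) ∧ (i = w.len ∨ (w.letter (i + 1)).2 = false)

/-- Left maximality of the inverse prefix (letters `1, …, i`) of a walk of the
shape "inverse prefix followed by direct suffix": the underlying direct path
out of the vertex at position `i` cannot be prolonged (and, when the prefix is
trivial, no second arrow leaves the starting vertex). -/
def LeftMaxAt (Q : GentleData) (w : StrWalk Q) (i : ℕ) : Prop :=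
  if 1 ≤ i then ∀ α : Q.A, Q.src α = w.vtx 0 → Q.rel (w.letter 1).1 α
  else ∀ α : Q.A, Q.src α = w.vtx 0 → (1 ≤ w.len ∧ α = (w.letter 1).1)

/-- Right maximality of the direct suffix (letters `i+1, …, len`) of a walk of
the shape "inverse prefix followed by direct suffix". -/
def RightMaxAt (Q : GentleData) (w : StrWalk Q) (i : ℕ) : Prop :=
  if i < w.len then ∀ β : Q.A, Q.src β = w.vtx w.len → Q.rel (w.letter w.len).1 β
  else ∀ β : Q.A, Q.src β = w.vtx w.len → (1 ≤ w.len ∧ β = (w.letter w.len).1)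

end Strings

section Combinatorics

lemma gentle_succ_unique {Q : GentleData} (hQ : IsGentle Q) {a b b' : Q.A}
    (h : Q.rel a b) (h' : Q.rel a b') : b = b' := by
  have h7 := hQ.2.2.2.2.2.2.1 a
  rw [Set.ncard_le_one (Set.toFinite _)] at h7
  exact h7 b ⟨(hQ.1 _ _ h).symm, h⟩ b' ⟨(hQ.1 _ _ h').symm, h'⟩

lemma gentle_pred_unique {Q : GentleData} (hQ : IsGentle Q) {a a' b : Q.A}
    (h : Q.rel a b) (h' : Q.rel a' b) : a = a' := by
  have h7 := hQ.2.2.2.2.1 b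
  rw [Set.ncard_le_one (Set.toFinite _)] at h7
  exact h7 a ⟨hQ.1 _ _ h, h⟩ a' ⟨hQ.1 _ _ h', h'⟩

lemma gentle_nonrel_unique {Q : GentleData} (hQ : IsGentle Q) {a b b' : Q.A}
    (h : Q.tgt a = Q.src b ∧ ¬ Q.rel a b) (h' : Q.tgt a = Q.src b' ∧ ¬ Q.rel a b') : b = b' := by
  have h7 := hQ.2.2.2.2.2.1 a
  rw [Set.ncard_le_one (Set.toFinite _)] at h7
  exact h7 b ⟨h.1.symm, h.2⟩ b' ⟨h'.1.symm, h'.2⟩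

lemma cyc_of_seq {Q : GentleData} (hQ : IsGentle Q) (p : ℕ → Q.A)
    (hp : ∀ i, Q.rel (p i) (p (i + 1))) (hper : ∃ n, 1 ≤ n ∧ p n = p 0) :
    ∃ ℓ : ℕ, 1 ≤ ℓ ∧ ∃ c : ZMod ℓ → Q.A, IsOCFCycle Q c ∧ Function.Injective c ∧ c 0 = p 0 := by
  classical
  obtain ⟨n, ⟨hn1, hn⟩, hmin⟩ : ∃ n, (1 ≤ n ∧ p n = p 0) ∧ ∀ m, m < n → ¬ (1 ≤ m ∧ p m = p 0) :=
    ⟨Nat.find hper, Nat.find_spec hper, fun m hm => Nat.find_min hper hm⟩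
  have hshift : ∀ m, p (m + n) = p m := by
    intro m
    induction m with
    | zero => simpa using hn
    | succ m ih =>
      have h1 := hp (m + n)
      rw [ih] at h1
      have := gentle_succ_unique hQ h1 (hp m)
      rw [← this]; congr 1; omega
  have hmul : ∀ t m, p (m + n * t) = p m := by
    intro t
    induction t with
    | zero => simp
    | succ t ih => intro m; rw [Nat.mul_succ, ← add_assoc, hshift, ih]
  have hmod : ∀ m, p (m % n) = p m := by
    intro m
    conv_rhs => rw [← Nat.mod_add_div m n]
    rw [hmul]
  have hback : ∀ i j, p i = p (i + j) → p 0 = p j := by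
    intro i j
    induction i with
    | zero => simp
    | succ i ih =>
      intro h
      apply ih
      have h1 := hp i
      have h2 := hp (i + j)
      rw [h] at h1
      have e : i + 1 + j = i + j + 1 := by omega
      rw [e] at h1
      exact gentle_pred_unique hQ h1 h2
  haveI : NeZero n := ⟨by omega⟩
  refine ⟨n, hn1, fun i => p i.val, ?_, ?_, by simp⟩
  · intro i
    have : p (i + 1).val = p (i.val + 1) := by
      have e : i + 1 = ((i.val + 1 : ℕ) : ZMod n) := by simp
      rw [e, ZMod.val_natCast, hmod]
    simp only [this]
    exact ⟨hQ.1 _ _ (hp _), hp _⟩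
  · have key : ∀ i j : ZMod n, i.val < j.val → p i.val ≠ p j.val := by
      intro i j hij h
      have hj := ZMod.val_lt j
      have e : j.val = i.val + (j.val - i.val) := by omega
      rw [e] at h
      exact hmin _ (by omega) ⟨by omega, (hback _ _ h).symm⟩
    intro i j h
    rcases lt_trichotomy i.val j.val with h1 | h1 | h1
    · exact absurd h (key _ _ h1)
    · exact ZMod.val_injective n h1
    · exact absurd h.symm (key _ _ h1)

lemma ocf_of_chain {Q : GentleData} (hQ : IsGentle Q) (S : Set Q.A)
    (hS : ∀ γ ∈ S, ∃ β ∈ S, Q.rel β γ) (γ : Q.A) (hγ : γ ∈ S) : OnOCFCycle Q γ := by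
  classical
  choose f hfS hf using hS
  let q : ℕ → S := fun n => Nat.rec ⟨γ, hγ⟩ (fun _ x => ⟨f x.1 x.2, hfS _ _⟩) n
  let p : ℕ → Q.A := fun n => (q n).1
  have hp : ∀ n, Q.rel (p (n + 1)) (p n) := fun n => hf _ _
  have hp0 : p 0 = γ := rfl
  clear_value p
  obtain ⟨i, j, hij, h⟩ := Finite.exists_ne_map_eq_of_infinite p
  wlog hlt : i < j generalizing i j
  · exact this j i hij.symm h.symm (by omega)
  have hback : ∀ i n, p i = p (i + n) → p 0 = p n := by
    intro i n
    induction i with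
    | zero => simp
    | succ i ih =>
      intro h
      apply ih
      have h1 := hp i
      have h2 := hp (i + n)
      rw [h] at h1
      have e : i + 1 + n = i + n + 1 := by omega
      rw [e] at h1
      exact gentle_succ_unique hQ h1 h2
  obtain ⟨n, rfl⟩ : ∃ n, j = i + (n + 1) := ⟨j - i - 1, by omega⟩
  have h0 := hback _ _ h
  have hshift : ∀ m, p (m + (n + 1)) = p m := by
    intro m
    induction m with
    | zero => simpa using h0.symm
    | succ m ih =>
      have h1 := hp (m + (n + 1))
      rw [ih] at h1
      have := gentle_pred_unique hQ h1 (hp m)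
      rw [← this]; congr 1; omega
  have hmul : ∀ t, p ((n + 1) * t) = p 0 := by
    intro t
    induction t with
    | zero => simp
    | succ t ih => rw [Nat.mul_succ, hshift, ih]
  obtain ⟨ℓ, h1, c, hc, -, hc0⟩ := cyc_of_seq hQ (fun m => p (n * m)) (by
      intro m
      have := hp (n * m + n)
      have e := hshift (n * m)
      rw [add_assoc, e] at this
      simpa [Nat.mul_succ] using this) ⟨n + 1, by omega, by
        have := hmul n
        rw [mul_comm] at this
        simpa using this⟩
  exact ⟨ℓ, h1, c, hc, 0, by simpa [hp0] using hc0⟩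

lemma seq_of_ocf {Q : GentleData} {γ : Q.A} (h : OnOCFCycle Q γ) :
    ∃ q : ℤ → Q.A, q (-1) = γ ∧ ∀ n, Q.rel (q (n + 1)) (q n) := by
  obtain ⟨ℓ, h1, c, hc, i, rfl⟩ := h
  refine ⟨fun n => c (i - 1 - (n : ZMod ℓ)), by simp, fun n => ?_⟩
  have := (hc (i - 1 - ((n + 1 : ℤ) : ZMod ℓ))).2
  convert this using 2
  push_cast; ring

lemma exists_inj_cycle {Q : GentleData} (hQ : IsGentle Q) {a : Q.A} (h : OnOCFCycle Q a) :
    ∃ ℓ : ℕ, 1 ≤ ℓ ∧ ∃ c : ZMod ℓ → Q.A, IsOCFCycle Q c ∧ Function.Injective c ∧ c 0 = a := by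
  obtain ⟨ℓ, h1, c, hc, i, rfl⟩ := h
  have := cyc_of_seq hQ (fun m => c (i + m)) (fun m => by
    have := (hc (i + m)).2
    simpa [add_assoc] using this) ⟨ℓ, h1, by simp⟩
  simpa using this

lemma cycle_eq_of_zero {Q : GentleData} (hQ : IsGentle Q) {ℓ ℓ' : ℕ} {c : ZMod ℓ → Q.A}
    {c' : ZMod ℓ' → Q.A} (hc : IsOCFCycle Q c) (hc' : IsOCFCycle Q c') (h : c 0 = c' 0) (m : ℕ) :
    c m = c' m := by
  induction m with
  | zero => simpa using h
  | succ m ih =>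
    have h1 := (hc m).2
    have h2 := (hc' m).2
    rw [ih] at h1
    have := gentle_succ_unique hQ h1 h2
    simpa using this

abbrev InjCyc (Q : GentleData) (ℓ : ℕ) : Type :=
  {c : ZMod ℓ → Q.A // IsOCFCycle Q c ∧ Function.Injective c}

lemma card_injCyc (Q : GentleData) (ℓ : ℕ) (hℓ : 1 ≤ ℓ) :
    Nat.card (InjCyc Q ℓ) = ℓ * AGzero Q ℓ := by
  classical
  haveI : NeZero ℓ := ⟨by omega⟩
  have key : ∀ x : Quotient (ocfCycleSetoid Q ℓ),
      Nonempty (ZMod ℓ ≃ {c : InjCyc Q ℓ // (Quotient.mk (ocfCycleSetoid Q ℓ) c) = x}) := by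
    intro x
    induction x using Quotient.inductionOn with
    | h c =>
      refine ⟨Equiv.ofBijective (fun t => ⟨⟨fun i => c.1 (i + t), ?_, ?_⟩, ?_⟩) ⟨?_, ?_⟩⟩
      · intro i
        have := c.2.1 (i + t)
        rwa [show i + t + 1 = i + 1 + t by ring] at this
      · intro i j hij
        exact add_right_cancel (c.2.2 hij)
      · apply Quotient.sound
        refine ⟨-t, fun i => ?_⟩
        simp
      · intro t t' h
        have := congrFun (congrArg (fun z => z.1.1) h) 0
        simpa using c.2.2 this
      · rintro ⟨c', hc'⟩
        obtain ⟨t, ht⟩ := Quotient.exact hc'.symm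
        exact ⟨t, by ext i; exact (ht i).symm⟩
  have e : InjCyc Q ℓ ≃ ZMod ℓ × Quotient (ocfCycleSetoid Q ℓ) :=
    (Equiv.sigmaFiberEquiv (Quotient.mk (ocfCycleSetoid Q ℓ))).symm.trans
      ((Equiv.sigmaCongrRight fun x => (key x).some.symm).trans
        ((Equiv.sigmaEquivProd _ _).trans (Equiv.prodComm _ _)))
  rw [Nat.card_congr e, Nat.card_prod, AGzero, Nat.card_zmod]

lemma ncard_ocf {Q : GentleData} (hQ : IsGentle Q) :
    Set.ncard {a : Q.A | OnOCFCycle Q a} =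
      ∑ ℓ ∈ Finset.range (Fintype.card Q.A + 1), ℓ * AGzero Q ℓ := by
  classical
  rw [Finset.sum_range_succ', zero_mul, add_zero, ← Fin.sum_univ_eq_sum_range
    (fun i => (i + 1) * AGzero Q (i + 1))]
  have : ∀ i : Fin (Fintype.card Q.A), (i.1 + 1) * AGzero Q (i.1 + 1) =
      Nat.card (InjCyc Q (i.1 + 1)) := fun i => (card_injCyc Q _ (by omega)).symm
  simp_rw [this]
  have hfin : ∀ i : Fin (Fintype.card Q.A), Finite (InjCyc Q (i.1 + 1)) := fun i =>
    inferInstance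
  rw [← Nat.card_sigma, ← Nat.card_coe_set_eq]
  symm
  refine Nat.card_congr (Equiv.ofBijective
    (fun x => ⟨x.2.1 0, x.1.1 + 1, by omega, x.2.1, x.2.2.1, 0, rfl⟩) ⟨?_, ?_⟩)
  · rintro ⟨i, c, hc, hci⟩ ⟨j, d, hd, hdi⟩ h
    have h0 : c 0 = d 0 := congrArg Subtype.val h
    have hm := cycle_eq_of_zero hQ hc hd h0
    have h1 : (j.1 + 1) ∣ (i.1 + 1) := by
      have := hm (i.1 + 1)
      rw [ZMod.natCast_self, h0] at this
      exact (ZMod.natCast_eq_zero_iff _ _).1 (hdi this).symm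
    have h2 : (i.1 + 1) ∣ (j.1 + 1) := by
      have := hm (j.1 + 1)
      rw [ZMod.natCast_self, ← h0] at this
      exact (ZMod.natCast_eq_zero_iff _ _).1 (hci this)
    have hij : i = j := by
      have := Nat.dvd_antisymm h1 h2
      exact Fin.ext (by omega)
    subst hij
    congr 2
    funext t
    have := hm t.val
    simpa using this
  · rintro ⟨a, ha⟩
    obtain ⟨ℓ, h1, c, hc, hci, rfl⟩ := exists_inj_cycle hQ ha
    haveI : NeZero ℓ := ⟨by omega⟩
    have hle : ℓ ≤ Fintype.card Q.A := by
      have := Fintype.card_le_of_injective c hci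
      rwa [ZMod.card] at this
    obtain ⟨n, rfl⟩ : ∃ n, ℓ = n + 1 := ⟨ℓ - 1, by omega⟩
    exact ⟨⟨⟨n, by omega⟩, c, hc, hci⟩, rfl⟩

end Combinatorics

section Generic

/-- The facts about `kQ/I` used in the classification, for an abstract ring `B`. -/
structure GM (k : Type) [Field k] (Q : GentleData) (B : Type) [Ring B] [Algebra k B] where
  e : Q.V → B
  ar : Q.A → B
  ε : Q.V → B →ₐ[k] k
  prj : Q.A → B →+ B
  idem : ∀ v, e v * e v = e v
  orth : ∀ v w, v ≠ w → e v * e w = 0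
  src_mul : ∀ a, e (Q.src a) * ar a = ar a
  mul_tgt : ∀ a, ar a * e (Q.tgt a) = ar a
  relation : ∀ a b, Q.rel a b → ar a * ar b = 0
  ar_ne : ∀ a, ar a ≠ 0
  eps_e : ∀ v, ε v (e v) = 1
  eps_e_ne : ∀ v w, v ≠ w → ε v (e w) = 0
  eps_ar : ∀ v a, ε v (ar a) = 0
  nil : ∀ a, (∀ v, ε v a = 0) → IsNilpotent a
  decL : ∀ a, (∀ v, ε v a = 0) → ∃ u : Q.A → B, a = ∑ g, ar g * u g
  decR : ∀ a, (∀ v, ε v a = 0) → ∃ u : Q.A → B, a = ∑ g, u g * ar g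
  indR : ∀ u : Q.A → B, ∑ g, u g * ar g = 0 → ∀ g, u g * ar g = 0
  prj_same : ∀ g b, prj g (ar g * b) = ar g * b
  prj_ne : ∀ g g' b, g ≠ g' → prj g (ar g' * b) = 0
  annL : ∀ (g : Q.A) (a : B), ar g * a = 0 → e (Q.tgt g) * a = a →
    ∀ S : AddSubgroup B, (∀ d u, Q.rel g d → ar d * u ∈ S) → a ∈ S
  annR : ∀ (g : Q.A) (a : B), a * ar g = 0 → a * e (Q.src g) = a →
    ∀ S : AddSubgroup B, (∀ d u, Q.rel d g → u * ar d ∈ S) → a ∈ S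

variable {k : Type} [Field k] {Q : GentleData} {B : Type} [Ring B] [Algebra k B]

/-- Left multiplication as a map of right modules. -/
def lm (b : B) : B →ₗ[Bᵐᵒᵖ] B where
  toFun x := b * x
  map_add' x y := mul_add b x y
  map_smul' r x := by
    induction r using MulOpposite.rec' with
    | h r => simp [mul_assoc]

@[simp] lemma lm_apply (b x : B) : lm b x = b * x := rfl

/-- The map of right modules from `B` sending `1` to `x`. -/
def ev {G : Type} [AddCommGroup G] [Module Bᵐᵒᵖ G] (x : G) : B →ₗ[Bᵐᵒᵖ] G where
  toFun b := op b • x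
  map_add' a b := by rw [op_add, add_smul]
  map_smul' r b := by
    induction r using MulOpposite.rec' with
    | h r => simp [mul_smul]

@[simp] lemma ev_apply {G : Type} [AddCommGroup G] [Module Bᵐᵒᵖ G] (x : G) (b : B) :
    ev x b = op b • x := rfl

lemma rsm {G : Type} [AddCommGroup G] [Module Bᵐᵒᵖ G] (a b : B) (x : G) :
    op a • op b • x = op (b * a) • x := by
  rw [smul_smul, op_mul]

lemma map_op {G : Type} [AddCommGroup G] [Module Bᵐᵒᵖ G] (f : G →ₗ[Bᵐᵒᵖ] B) (a : B) (x : G) :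
    f (op a • x) = f x * a := by
  rw [map_smul, op_smul_eq_mul]

instance projB : Module.Projective Bᵐᵒᵖ B :=
  Module.Projective.of_equiv
    ({ toFun := fun x => unop x
       map_add' := fun _ _ => rfl
       map_smul' := fun r x => by simp [smul_eq_mul]
       invFun := fun x => op x
       left_inv := fun _ => rfl
       right_inv := fun _ => rfl } : Bᵐᵒᵖ ≃ₗ[Bᵐᵒᵖ] B)

/-- Coordinates of a projective module. -/
lemma proj_coords (P : Type) [AddCommGroup P] [Module Bᵐᵒᵖ P] [Module.Projective Bᵐᵒᵖ P] :
    ∃ (f : P → (P →ₗ[Bᵐᵒᵖ] B)) (F : P → Finset P),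
      ∀ x, x = ∑ i ∈ F x, op (f i x) • i := by
  obtain ⟨s, hs⟩ := Module.projective_def'.1 (inferInstance : Module.Projective Bᵐᵒᵖ P)
  refine ⟨fun i =>
    { toFun := fun x => unop (s x i)
      map_add' := fun x y => by simp
      map_smul' := fun r x => by
        induction r using MulOpposite.rec' with
        | h r => simp }, fun x => (s x).support, fun x => ?_⟩
  have := LinearMap.congr_fun hs x
  simp only [LinearMap.comp_apply, Finsupp.linearCombination_apply, Finsupp.sum, id,
    LinearMap.id_apply] at this
  simpa using this.symm

lemma proj_ext {P : Type} [AddCommGroup P] [Module Bᵐᵒᵖ P] [Module.Projective Bᵐᵒᵖ P]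
    {x : P} (h : ∀ f : P →ₗ[Bᵐᵒᵖ] B, f x = 0) : x = 0 := by
  obtain ⟨f, F, hF⟩ := proj_coords (B := B) P
  rw [hF x]
  exact Finset.sum_eq_zero fun i _ => by rw [h]; simp

lemma indec_idem {R G : Type} [Ring R] [AddCommGroup G] [Module R G]
    (hG : IndecomposableModule R G) (h : G →ₗ[R] G) (hid : ∀ z, h (h z) = h z)
    (w : G) (hw : w ≠ 0) (hw' : h w = w) (z : G) : h z = z := by
  have hid' : IsIdempotentElem h := LinearMap.ext hid
  rcases hG.2 _ _ (LinearMap.IsIdempotentElem.isCompl hid') with h0 | h0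
  · exfalso
    apply hw
    have : w ∈ LinearMap.range h := ⟨w, hw'⟩
    rwa [h0, Submodule.mem_bot] at this
  · exact LinearMap.ker_eq_bot.1 h0 (hid z)

namespace GM

variable (M : GM k Q B)

lemma isUnit_add (c : k) (hc : c ≠ 0) (r : B) (hr : ∀ v, M.ε v r = 0) :
    IsUnit (c • (1 : B) + r) := by
  have h1 : IsUnit (c • (1 : B)) := by
    rw [← Algebra.algebraMap_eq_smul_one]
    exact (IsUnit.mk0 c hc).map _
  refine (M.nil r hr).isUnit_add_left_of_commute h1 ?_
  rw [← Algebra.algebraMap_eq_smul_one]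
  exact (Algebra.commutes c r).symm

lemma e_ne (v : Q.V) : M.e v ≠ 0 := by
  intro h
  have := M.eps_e v
  rw [h, map_zero] at this
  exact zero_ne_one this

lemma eps_zero (v w : Q.V) (a : B) (hv : a * M.e v = a) (h : w ≠ v) : M.ε w a = 0 := by
  rw [← hv, map_mul, M.eps_e_ne _ _ h, mul_zero]

lemma unit_at (v : Q.V) (a : B) (h1 : M.e v * a = a) (h2 : a * M.e v = a) (h : M.ε v a ≠ 0) :
    ∃ b, a * b = M.e v := by
  have hu : IsUnit ((M.ε v a) • (1 : B) + (a - (M.ε v a) • M.e v)) := by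
    refine M.isUnit_add _ h _ fun w => ?_
    by_cases hw : w = v
    · subst hw
      simp [M.eps_e]
    · rw [map_sub, M.eps_zero v w a h2 hw, map_smul, M.eps_e_ne w v hw]; simp
  obtain ⟨b, hb⟩ := hu.exists_right_inv
  refine ⟨b, ?_⟩
  have := congrArg (fun x => M.e v * x) hb
  simp only [← mul_assoc, mul_one] at this
  rw [← this]
  congr 1
  rw [mul_add, mul_sub, h1]
  simp [M.idem]

lemma no_loop (g : Q.A) (a : B) (h : M.ar g * a = M.ar g) (ha : ∀ v, M.ε v a = 0) : False := by
  have hu := M.isUnit_add 1 one_ne_zero (-a) (fun v => by rw [map_neg, ha, neg_zero])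
  have h0 : M.ar g * ((1 : k) • (1 : B) + -a) = 0 := by
    rw [one_smul, mul_add, mul_neg, h]; simp
  exact M.ar_ne g ((hu.mul_left_eq_zero).1 h0)

lemma ar_mul_ar_zero (a b : Q.A) (h : Q.tgt a ≠ Q.src b) : M.ar a * M.ar b = 0 := by
  rw [← M.mul_tgt a, ← M.src_mul b, mul_assoc, ← mul_assoc (M.e _) (M.e _), M.orth _ _ h]
  simp

lemma cancelL (a b : Q.A) (h : Q.tgt a = Q.src b) (hr : ¬ Q.rel a b) (x : B)
    (hx : M.ar a * (M.ar b * x) = 0) : M.ar b * x = 0 := by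
  have := M.annL a (M.ar b * x) hx (by rw [h, ← mul_assoc, M.src_mul])
    (M.prj b).ker (fun d u hd => by
      rw [AddMonoidHom.mem_ker]
      apply M.prj_ne
      rintro rfl
      exact hr hd)
  rw [AddMonoidHom.mem_ker, M.prj_same] at this
  exact this

lemma eps_mul_ar (v : Q.V) (a : B) (g : Q.A) : M.ε v (a * M.ar g) = 0 := by
  rw [map_mul, M.eps_ar, mul_zero]

lemma eps_ar_mul (v : Q.V) (a : B) (g : Q.A) : M.ε v (M.ar g * a) = 0 := by
  rw [map_mul, M.eps_ar, zero_mul]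

/-- Independence of the final arrows in projective modules. -/
lemma proj_indR {P : Type} [AddCommGroup P] [Module Bᵐᵒᵖ P] [Module.Projective Bᵐᵒᵖ P]
    (z : Q.A → P) (h : ∑ g, op (M.ar g) • z g = 0) (g : Q.A) : op (M.ar g) • z g = 0 := by
  apply proj_ext (B := B)
  intro f
  rw [map_op]
  apply M.indR (fun g => f (z g))
  have := congrArg f h
  simpa only [map_sum, map_op, map_zero] using this

lemma proj_annR {P : Type} [AddCommGroup P] [Module Bᵐᵒᵖ P] [Module.Projective Bᵐᵒᵖ P]
    (g : Q.A) (u : P) (h : op (M.ar g) • u = 0) (hu : op (M.e (Q.src g)) • u = u)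
    (S : AddSubgroup P) (hS : ∀ d z, Q.rel d g → op (M.ar d) • z ∈ S) : u ∈ S := by
  obtain ⟨f, F, hF⟩ := proj_coords (B := B) P
  rw [hF u]
  refine sum_mem fun i _ => ?_
  refine M.annR g (f i u) (by rw [← map_op, h, map_zero]) (by rw [← map_op, hu])
    (S.comap (AddMonoidHom.mk' (fun b : B => op b • i) (fun a b => by rw [op_add, add_smul])))
    (fun d w hd => ?_)
  have := hS d (op w • i) hd
  rw [rsm] at this
  exact this

/-- Functionals on a non-projective indecomposable module take values in the radical. -/
lemma fun_rad {G : Type} [AddCommGroup G] [Module Bᵐᵒᵖ G] (hG : IndecomposableModule Bᵐᵒᵖ G)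
    (hnp : ¬ Module.Projective Bᵐᵒᵖ G) (f : G →ₗ[Bᵐᵒᵖ] B) (x : G) (v : Q.V) :
    M.ε v (f x) = 0 := by
  by_contra hne
  obtain ⟨b, hb⟩ := M.unit_at v (M.e v * f x * M.e v)
    (by rw [← mul_assoc, ← mul_assoc, M.idem]) (by rw [mul_assoc, M.idem])
    (by rw [map_mul, map_mul, M.eps_e]; simpa using hne)
  set g : G →ₗ[Bᵐᵒᵖ] B := (lm (M.e v)) ∘ₗ f with hg
  have hgv : ∀ y, M.e v * g y = g y := fun y => by
    simp [hg, ← mul_assoc, M.idem]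
  set y : G := op (M.e v * b * M.e v) • x with hy
  have hgy : g y = M.e v := by
    rw [hy, map_op]
    have : g x = M.e v * f x := rfl
    rw [this, ← mul_assoc, ← mul_assoc, hb, M.idem]
  have hye : op (M.e v) • y = y := by
    rw [hy, rsm, mul_assoc, M.idem]
  set h : G →ₗ[Bᵐᵒᵖ] G := ev y ∘ₗ g with hh
  have hid : ∀ z, h (h z) = h z := by
    intro z
    simp only [hh, LinearMap.comp_apply, ev_apply, map_op, hgy, hgv]
  have hy0 : y ≠ 0 := by
    intro h0
    rw [h0, map_zero] at hgy
    exact M.e_ne v hgy.symm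
  have hall := indec_idem hG h hid y hy0 (by
    simp only [hh, LinearMap.comp_apply, ev_apply, hgy, hye])
  exact hnp (Module.Projective.of_split g (ev y) (LinearMap.ext hall))

lemma recover (g : Q.A) (a : B) (h : M.ε (Q.tgt g) a ≠ 0) : ∃ c, M.ar g * a * c = M.ar g := by
  set t := Q.tgt g with ht
  obtain ⟨b, hb⟩ := M.unit_at t (M.e t * a * M.e t)
    (by rw [← mul_assoc, ← mul_assoc, M.idem]) (by rw [mul_assoc, M.idem])
    (by rw [map_mul, map_mul, M.eps_e]; simpa using h)
  refine ⟨M.e t * b, ?_⟩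
  have := congrArg (fun x => M.ar g * x) hb
  simp only [← mul_assoc, ht, M.mul_tgt] at this
  simpa only [← mul_assoc, ht] using this

lemma eps_ne_of_loop (g : Q.A) (a : B) (h : M.ar g * a = M.ar g) : M.ε (Q.tgt g) a ≠ 0 := by
  intro h0
  set t := Q.tgt g with ht
  refine M.no_loop g (M.e t * a * M.e t) ?_ fun v => ?_
  · rw [← mul_assoc, ← mul_assoc, ht, M.mul_tgt, h, M.mul_tgt]
  · by_cases hv : v = t
    · subst hv; rw [map_mul, map_mul, h0]; simp
    · exact M.eps_zero t v _ (by rw [mul_assoc, M.idem]) hv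

lemma prj_sum (u : Q.A → B) (g : Q.A) : M.prj g (∑ d, M.ar d * u d) = M.ar g * u g := by
  rw [map_sum, Finset.sum_eq_single g, M.prj_same]
  · intro d _ hd
    exact M.prj_ne _ _ _ hd.symm
  · simp

lemma wf (hQ : IsGentle Q) :
    WellFounded (fun b a : Q.A => Q.tgt a = Q.src b ∧ ¬ Q.rel a b) := by
  rw [wellFounded_iff_isEmpty_descending_chain]
  obtain ⟨N, hN⟩ := hQ.2.2.2.2.2.2.2
  exact ⟨fun f => hN f.1 fun i _ => f.2 i⟩

lemma psi_wf (hQ : IsGentle Q) {G : Type} [AddCommGroup G] [Module Bᵐᵒᵖ G] (g : Q.A) :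
    ∀ ψ : G →ₗ[Bᵐᵒᵖ] B, ψ ≠ 0 → (∀ y, ∃ a, ψ y = M.ar g * a) →
    ∃ (g' : Q.A) (ψ' : G →ₗ[Bᵐᵒᵖ] B) (x : G), (∀ y, ∃ a, ψ' y = M.ar g' * a) ∧
      ψ' x = M.ar g' := by
  induction g using (wf hQ).induction with
  | _ g ih =>
  intro ψ hψ hr
  by_cases hx : ∃ x a, ψ x = M.ar g * a ∧ M.ε (Q.tgt g) a ≠ 0
  · obtain ⟨x, a, h1, h2⟩ := hx
    obtain ⟨c, hc⟩ := M.recover g a h2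
    exact ⟨g, ψ, op c • x, hr, by rw [map_op, h1, hc]⟩
  · push Not at hx
    have key : ∀ y, ∃ u : Q.A → B, ψ y = ∑ d, M.ar g * (M.ar d * u d) := by
      intro y
      obtain ⟨a, ha⟩ := hr y
      have h0 := hx y a ha
      obtain ⟨u, hu⟩ := M.decL (M.e (Q.tgt g) * a) (fun v => by
        by_cases hv : v = Q.tgt g
        · subst hv; rw [map_mul, h0, mul_zero]
        · rw [map_mul, M.eps_e_ne _ _ hv, zero_mul])
      refine ⟨u, ?_⟩
      rw [← Finset.mul_sum, ← hu, ← mul_assoc, M.mul_tgt, ha]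
    by_cases hb : ∃ b, Q.tgt g = Q.src b ∧ ¬ Q.rel g b
    · obtain ⟨b, hb⟩ := hb
      have key2 : ∀ y, ∃ w, (∃ u, w = M.ar b * u) ∧ ψ y = M.ar g * w := by
        intro y
        obtain ⟨u, hu⟩ := key y
        refine ⟨M.ar b * u b, ⟨_, rfl⟩, ?_⟩
        rw [hu]
        refine Finset.sum_eq_single b ?_ (by simp)
        intro d _ hd
        rw [← mul_assoc]
        by_cases h1 : Q.tgt g = Q.src d
        · by_cases h2 : Q.rel g d
          · rw [M.relation _ _ h2, zero_mul]
          · exact absurd (gentle_nonrel_unique hQ ⟨h1, h2⟩ hb) hd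
        · rw [M.ar_mul_ar_zero _ _ h1, zero_mul]
      choose w hw1 hw2 using key2
      have huniq : ∀ w1 w2 : B, (∃ u, w1 = M.ar b * u) → (∃ u, w2 = M.ar b * u) →
          M.ar g * w1 = M.ar g * w2 → w1 = w2 := by
        rintro _ _ ⟨u1, rfl⟩ ⟨u2, rfl⟩ h
        rw [← sub_eq_zero, ← mul_sub] at h ⊢
        rw [← mul_sub] at h
        exact M.cancelL g b hb.1 hb.2 _ h
      let ψ' : G →ₗ[Bᵐᵒᵖ] B :=
        { toFun := w
          map_add' := fun x y => by
            apply huniq _ _ (hw1 _)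
            · obtain ⟨u1, h1⟩ := hw1 x
              obtain ⟨u2, h2⟩ := hw1 y
              exact ⟨u1 + u2, by rw [h1, h2, mul_add]⟩
            · rw [← hw2, map_add, mul_add, ← hw2, ← hw2]
          map_smul' := fun r x => by
            induction r using MulOpposite.rec' with
            | h r =>
              apply huniq _ _ (hw1 _)
              · obtain ⟨u1, h1⟩ := hw1 x
                exact ⟨u1 * r, by simp [h1, mul_assoc]⟩
              · rw [← hw2, map_op, RingHom.id_apply, op_smul_eq_mul, ← mul_assoc, ← hw2] }
      refine ih b hb ψ' ?_ hw1
      intro h0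
      apply hψ
      ext y
      have : w y = 0 := LinearMap.congr_fun h0 y
      rw [hw2, this]; simp
    · exfalso
      apply hψ
      ext y
      obtain ⟨u, hu⟩ := key y
      rw [hu]
      refine Finset.sum_eq_zero fun d _ => ?_
      rw [← mul_assoc]
      by_cases h1 : Q.tgt g = Q.src d
      · by_cases h2 : Q.rel g d
        · rw [M.relation _ _ h2, zero_mul]
        · exact absurd ⟨d, h1, h2⟩ hb
      · rw [M.ar_mul_ar_zero _ _ h1, zero_mul]

lemma exists_psi (hQ : IsGentle Q) {G : Type} [AddCommGroup G] [Module Bᵐᵒᵖ G]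
    (hG : IndecomposableModule Bᵐᵒᵖ G) (hnp : ¬ Module.Projective Bᵐᵒᵖ G)
    (f : G →ₗ[Bᵐᵒᵖ] B) (hf : f ≠ 0) :
    ∃ (g' : Q.A) (ψ' : G →ₗ[Bᵐᵒᵖ] B) (x : G), (∀ y, ∃ a, ψ' y = M.ar g' * a) ∧
      ψ' x = M.ar g' := by
  have key : ∀ y, ∃ u : Q.A → B, f y = ∑ d, M.ar d * u d :=
    fun y => M.decL _ (M.fun_rad hG hnp f y)
  let ψ : Q.A → G →ₗ[Bᵐᵒᵖ] B := fun g =>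
    { toFun := fun y => M.prj g (f y)
      map_add' := fun x y => by simp
      map_smul' := fun r x => by
        induction r using MulOpposite.rec' with
        | h r =>
          obtain ⟨u, hu⟩ := key x
          rw [map_op, hu, RingHom.id_apply, op_smul_eq_mul, Finset.sum_mul]
          simp_rw [mul_assoc]
          rw [M.prj_sum (fun d => u d * r), M.prj_sum, mul_assoc] }
  have hne : ∃ g, ψ g ≠ 0 := by
    by_contra hcon
    push Not at hcon
    apply hf
    ext y
    obtain ⟨u, hu⟩ := key y
    rw [hu]
    refine Finset.sum_eq_zero fun d _ => ?_
    have : M.prj d (f y) = 0 := LinearMap.congr_fun (hcon d) y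
    rwa [hu, M.prj_sum] at this
  obtain ⟨g, hg⟩ := hne
  refine M.psi_wf hQ g (ψ g) hg fun y => ?_
  obtain ⟨u, hu⟩ := key y
  exact ⟨u g, by change M.prj g (f y) = _; rw [hu, M.prj_sum]⟩

/-- The inductive predicate used to walk along an acyclic complex of projectives. -/
def Good {P P' : Type} [AddCommGroup P] [Module Bᵐᵒᵖ P] [AddCommGroup P'] [Module Bᵐᵒᵖ P']
    (D : P →ₗ[Bᵐᵒᵖ] P') (z : P) (g : Q.A) : Prop :=
  op (M.e (Q.src g)) • z = z ∧ D (op (M.ar g) • z) = 0 ∧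
    ∀ z', op (M.ar g) • z' = op (M.ar g) • z → D z' ≠ 0

lemma good_step (hQ : IsGentle Q) {P P' P'' : Type} [AddCommGroup P] [Module Bᵐᵒᵖ P]
    [AddCommGroup P'] [Module Bᵐᵒᵖ P'] [AddCommGroup P''] [Module Bᵐᵒᵖ P'']
    [Module.Projective Bᵐᵒᵖ P'] (D : P →ₗ[Bᵐᵒᵖ] P') (D' : P' →ₗ[Bᵐᵒᵖ] P'')
    (hex : Function.Exact D D') (z : P) (g : Q.A) (h : M.Good D z g) :
    ∃ (b : Q.A) (z1 : P'), Q.rel b g ∧ M.Good D' z1 b := by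
  obtain ⟨h1, h2, h3⟩ := h
  have hu1 : op (M.ar g) • D z = 0 := by rw [← map_smul, h2]
  have hu2 : op (M.e (Q.src g)) • D z = D z := by rw [← map_smul, h1]
  by_cases hb : ∃ b, Q.rel b g
  · obtain ⟨b, hb⟩ := hb
    have := M.proj_annR g (D z) hu1 hu2
      (AddMonoidHom.mk' (fun x : P' => op (M.ar b) • x) (fun x y => smul_add _ _ _)).range
      (fun d z hd => by
        obtain rfl := gentle_pred_unique hQ hd hb
        exact ⟨z, rfl⟩)
    obtain ⟨z0, hz0⟩ := this
    change op (M.ar b) • z0 = D z at hz0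
    have hz1 : op (M.ar b) • op (M.e (Q.src b)) • z0 = D z := by
      rw [rsm, M.src_mul, hz0]
    refine ⟨b, op (M.e (Q.src b)) • z0, hb, by rw [rsm, M.idem], ?_, ?_⟩
    · rw [hz1]; exact hex.apply_apply_eq_zero z
    · intro z1' hz1' hD
      obtain ⟨y, rfl⟩ := (hex z1').1 hD
      refine h3 (z - op (M.ar b) • y) ?_ ?_
      · rw [smul_sub, rsm, M.relation _ _ hb]; simp
      · rw [map_sub, map_smul, hz1', hz1, sub_self]
  · exfalso
    have := M.proj_annR g (D z) hu1 hu2 ⊥ (fun d z hd => absurd ⟨d, hd⟩ hb)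
    exact h3 z rfl (by simpa using this)

lemma classify (hQ : IsGentle Q) {G P P' : Type} [AddCommGroup G] [Module Bᵐᵒᵖ G]
    [AddCommGroup P] [Module Bᵐᵒᵖ P] [AddCommGroup P'] [Module Bᵐᵒᵖ P']
    [Module.Projective Bᵐᵒᵖ P] [Module.Projective Bᵐᵒᵖ P']
    (hG : IndecomposableModule Bᵐᵒᵖ G) (hnp : ¬ Module.Projective Bᵐᵒᵖ G)
    (ι : G →ₗ[Bᵐᵒᵖ] P) (D : P →ₗ[Bᵐᵒᵖ] P') (hι : Function.Injective ι)
    (hex : Function.Exact ι D)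
    (hext : ∀ ψ : G →ₗ[Bᵐᵒᵖ] B, ∃ Ψ : P →ₗ[Bᵐᵒᵖ] B, ∀ y, Ψ (ι y) = ψ y) :
    ∃ (g : Q.A) (z : P), M.Good D z g ∧
      Nonempty (G ≃ₗ[Bᵐᵒᵖ] LinearMap.range (lm (M.ar g))) := by
  classical
  obtain ⟨f, hf⟩ : ∃ f : G →ₗ[Bᵐᵒᵖ] B, f ≠ 0 := by
    by_contra hcon
    push Not at hcon
    obtain ⟨y, hy⟩ := @exists_ne G hG.1 0
    apply hy
    apply hι
    rw [map_zero]
    apply proj_ext (B := B)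
    intro f
    exact LinearMap.congr_fun (hcon (f ∘ₗ ι)) y
  obtain ⟨g, ψ, x, hψ, hx⟩ := M.exists_psi hQ hG hnp f hf
  obtain ⟨Ψ, hΨ⟩ := hext ψ
  have hdec : ∃ z : Q.A → P, ι x = ∑ d, op (M.ar d) • z d := by
    obtain ⟨c, F, hF⟩ := proj_coords (B := B) P
    have : ∀ i, ∃ u : Q.A → B, c i (ι x) = ∑ d, u d * M.ar d := fun i =>
      M.decR _ (M.fun_rad hG hnp (c i ∘ₗ ι) x)
    choose u hu using this
    refine ⟨fun d => ∑ i ∈ F (ι x), op (u i d) • i, ?_⟩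
    conv_lhs => rw [hF (ι x)]
    simp_rw [Finset.smul_sum, rsm]
    rw [Finset.sum_comm]
    refine Finset.sum_congr rfl fun i _ => ?_
    rw [hu, Finset.op_sum, Finset.sum_smul]
  obtain ⟨z, hz⟩ := hdec
  have hDz : op (M.ar g) • D (z g) = 0 := by
    refine M.proj_indR (fun d => D (z d)) ?_ g
    have := hex.apply_apply_eq_zero x
    rw [hz, map_sum] at this
    simpa only [map_smul] using this
  have hΨz : Ψ (z g) * M.ar g = M.ar g := by
    have h1 : ∑ d, (Ψ (z d) - if d = g then 1 else 0) * M.ar d = 0 := by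
      have h2 : ∑ d, Ψ (z d) * M.ar d = M.ar g := by
        rw [← hx, ← hΨ x, hz, map_sum]
        simp only [map_op]
      simp only [sub_mul, Finset.sum_sub_distrib, h2, ite_mul, one_mul, zero_mul]
      simp
    have := M.indR _ h1 g
    simpa [sub_mul, sub_eq_zero] using this
  set z0 : P := op (M.e (Q.src g)) • z g with hz0
  have hgz : op (M.ar g) • z0 = op (M.ar g) • z g := by rw [hz0, rsm, M.src_mul]
  obtain ⟨w, hw⟩ := (hex (op (M.ar g) • z0)).1 (by rw [hgz, map_smul, hDz])
  have hψw : ψ w = M.ar g := by rw [← hΨ, hw, hgz, map_op, hΨz]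
  have hlift : ∀ y, op (ψ y) • z0 ∈ LinearMap.range ι := by
    intro y
    obtain ⟨a, ha⟩ := hψ y
    exact ⟨op a • w, by rw [map_smul, hw, rsm, ha]⟩
  let h : G →ₗ[Bᵐᵒᵖ] G := (LinearEquiv.ofInjective ι hι).symm.toLinearMap ∘ₗ
    LinearMap.codRestrict (LinearMap.range ι) (ev z0 ∘ₗ ψ) hlift
  have hh : ∀ y, ι (h y) = op (ψ y) • z0 := by
    intro y
    have := LinearEquiv.apply_symm_apply (LinearEquiv.ofInjective ι hι)
      (LinearMap.codRestrict (LinearMap.range ι) (ev z0 ∘ₗ ψ) hlift y)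
    exact congrArg Subtype.val this
  have hψh : ∀ y, ψ (h y) = ψ y := by
    intro y
    obtain ⟨a, ha⟩ := hψ y
    rw [← hΨ, hh, map_op, ha, ← mul_assoc, hz0, map_op]
    rw [mul_assoc (Ψ (z g)), M.src_mul, hΨz]
  have hall := indec_idem hG h (fun y => hι (by rw [hh, hψh, hh])) w
    (by rintro rfl; rw [map_zero] at hψw; exact M.ar_ne g hψw.symm)
    (hι (by rw [hh, hψw, hw]))
  refine ⟨g, z0, ⟨by rw [hz0, rsm, M.idem], by rw [hgz, map_smul, hDz], ?_⟩, ⟨?_⟩⟩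
  · intro z' h1 h2
    obtain ⟨y, rfl⟩ := (hex z').1 h2
    obtain ⟨a, ha⟩ := hψ y
    have h3 : op (M.ar g) • y = w := hι (by rw [map_smul, h1, hw])
    rw [← h3, map_op, ha, mul_assoc] at hψw
    exact M.no_loop g _ hψw fun v => M.eps_mul_ar v a g
  · refine LinearEquiv.ofBijective
      (LinearMap.codRestrict (LinearMap.range (lm (M.ar g))) ψ (fun y => ?_)) ⟨?_, ?_⟩
    · obtain ⟨a, ha⟩ := hψ y
      exact ⟨a, by rw [ha]; rfl⟩
    · intro y y' hyy
      have hyy' : ψ y = ψ y' := congrArg Subtype.val hyy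
      apply hι
      rw [← hall y, ← hall y', hh, hh, hyy']
    · rintro ⟨_, a, rfl⟩
      exact ⟨op a • w, Subtype.ext (by
        change ψ (op a • w) = _
        rw [map_op, hψw]; rfl)⟩

end GM
end Generic

section GenericTwo

variable {k : Type} [Field k] {Q : GentleData} {B : Type} [Ring B] [Algebra k B]

namespace GM

variable (M : GM k Q B)

lemma from_gp (hQ : IsGentle Q) {G : Type} [AddCommGroup G] [Module Bᵐᵒᵖ G]
    (h : IsIndecNonProjGP Bᵐᵒᵖ G) :
    ∃ g, OnOCFCycle Q g ∧ Nonempty (G ≃ₗ[Bᵐᵒᵖ] LinearMap.range (lm (M.ar g))) := by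
  obtain ⟨hG, ⟨P, d, hP, hex, hhom, ⟨i⟩⟩, hnp⟩ := h
  have ext0 : ∀ (n : ℤ) (ψ : LinearMap.range (d (n + 1)) →ₗ[Bᵐᵒᵖ] Bᵐᵒᵖ),
      ∃ χ : P (n + 1 + 1) →ₗ[Bᵐᵒᵖ] Bᵐᵒᵖ, ∀ y, χ y.1 = ψ y := by
    intro n ψ
    have h0 : (ψ ∘ₗ (d (n + 1)).rangeRestrict) ∘ₗ d n = 0 := by
      ext x
      have : (d (n + 1)).rangeRestrict (d n x) = 0 := by
        apply Subtype.ext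
        simpa using (hex n).apply_apply_eq_zero x
      simp [this]
    obtain ⟨χ, hχ⟩ := (hhom n (ψ ∘ₗ (d (n + 1)).rangeRestrict)).1 h0
    refine ⟨χ, ?_⟩
    rintro ⟨_, x, rfl⟩
    exact LinearMap.congr_fun hχ x
  have ext1 : ∀ (m : ℤ) (ψ : LinearMap.range (d m) →ₗ[Bᵐᵒᵖ] Bᵐᵒᵖ),
      ∃ χ : P (m + 1) →ₗ[Bᵐᵒᵖ] Bᵐᵒᵖ, ∀ y, χ y.1 = ψ y := by
    intro m
    obtain ⟨n, rfl⟩ : ∃ n, m = n + 1 := ⟨m - 1, by ring⟩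
    exact ext0 n
  let E : Bᵐᵒᵖ ≃ₗ[Bᵐᵒᵖ] B :=
     { toFun := fun x => unop x
       map_add' := fun _ _ => rfl
       map_smul' := fun r x => by simp [smul_eq_mul]
       invFun := fun x => op x
       left_inv := fun _ => rfl
       right_inv := fun _ => rfl }
  have := hP
  have hgood : ∀ g, (∃ n z, M.Good (d n) z g) → OnOCFCycle Q g := by
    intro g hg
    refine ocf_of_chain hQ {g | ∃ n z, M.Good (d n) z g} ?_ g hg
    rintro γ ⟨n, z, hz⟩
    obtain ⟨b, z1, hb, hz1⟩ := M.good_step hQ (d n) (d (n + 1)) (hex n) z γ hz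
    exact ⟨b, ⟨n + 1, z1, hz1⟩, hb⟩
  obtain ⟨g, z, hz, hi⟩ := M.classify hQ hG hnp
    ((LinearMap.range (d (-1))).subtype ∘ₗ i.toLinearMap) (d (-1 + 1))
    (by
      intro x y hxy
      exact i.injective (Subtype.ext hxy))
    (by
      intro y
      rw [hex (-1) y]
      constructor
      · rintro ⟨x, rfl⟩
        exact ⟨i.symm ⟨_, x, rfl⟩, by simp⟩
      · rintro ⟨x, rfl⟩
        exact (i x).2)
    (by
      intro ψ
      obtain ⟨χ, hχ⟩ := ext1 (-1) (E.symm.toLinearMap ∘ₗ ψ ∘ₗ i.symm.toLinearMap)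
      refine ⟨E.toLinearMap ∘ₗ χ, ?_⟩
      intro x
      have := hχ (i x)
      simp at this
      simp [this])
  exact ⟨g, hgood g ⟨_, z, hz⟩, hi⟩

lemma rsmS (N : Submodule Bᵐᵒᵖ B) (a b : B) (x : N) :
    op a • op b • x = op (b * a) • x := rsm a b x

lemma mem_range_lm (b x : B) : x ∈ LinearMap.range (lm b) ↔ ∃ a, b * a = x := Iff.rfl

/-- The generator of the arrow module. -/
def gen (g : Q.A) : LinearMap.range (lm (M.ar g)) := ⟨M.ar g, 1, by simp⟩

lemma gen_ne (g : Q.A) : M.gen g ≠ 0 := fun h => M.ar_ne g (congrArg Subtype.val h)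

lemma op_gen (g : Q.A) (a : B) : ((op a • M.gen g : LinearMap.range (lm (M.ar g))) : B) = M.ar g * a := rfl

lemma exists_op_gen (g : Q.A) (x : LinearMap.range (lm (M.ar g))) : ∃ a : B, x = op a • M.gen g := by
  obtain ⟨_, a, rfl⟩ := x
  exact ⟨a, Subtype.ext rfl⟩

lemma mem_of_eps (g : Q.A) (N : Submodule Bᵐᵒᵖ (LinearMap.range (lm (M.ar g)))) (a : B)
    (ha : op a • M.gen g ∈ N) (h : M.ε (Q.tgt g) a ≠ 0) : N = ⊤ := by
  obtain ⟨c, hc⟩ := M.recover g a h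
  have h1 : op c • op a • M.gen g = M.gen g := by
    rw [rsmS]
    apply Subtype.ext
    rw [op_gen, ← mul_assoc, hc]
    rfl
  have h2 : M.gen g ∈ N := by
    rw [← h1]
    exact N.smul_mem _ ha
  rw [eq_top_iff]
  intro x _
  obtain ⟨b, rfl⟩ := M.exists_op_gen g x
  exact N.smul_mem _ h2

lemma indec_arrow (g : Q.A) : IndecomposableModule Bᵐᵒᵖ (LinearMap.range (lm (M.ar g))) := by
  refine ⟨⟨M.gen g, 0, M.gen_ne g⟩, ?_⟩
  intro N N' hc
  have : M.gen g ∈ N ⊔ N' := by rw [hc.sup_eq_top]; trivial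
  obtain ⟨x, hx, y, hy, hxy⟩ := Submodule.mem_sup.1 this
  obtain ⟨a, rfl⟩ := M.exists_op_gen g x
  obtain ⟨a', rfl⟩ := M.exists_op_gen g y
  have h1 : M.ε (Q.tgt g) (a + a') ≠ 0 := by
    apply M.eps_ne_of_loop
    have := congrArg Subtype.val hxy
    rw [mul_add]
    exact this
  rw [map_add] at h1
  by_cases h2 : M.ε (Q.tgt g) a = 0
  · rw [h2, zero_add] at h1
    have := M.mem_of_eps g N' a' hy h1
    subst this
    exact Or.inl (disjoint_top.1 hc.disjoint)
  · have := M.mem_of_eps g N a hx h2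
    subst this
    exact Or.inr (top_disjoint.1 hc.disjoint)

lemma nonproj_arrow (hQ : IsGentle Q) (g d : Q.A) (h : Q.rel g d) :
    ¬ Module.Projective Bᵐᵒᵖ (LinearMap.range (lm (M.ar g))) := by
  intro hp
  obtain ⟨s, hs⟩ := Module.projective_lifting_property (lm (M.ar g)).rangeRestrict
    (LinearMap.id) (LinearMap.surjective_rangeRestrict _)
  have h1 : M.ar g * s (M.gen g) = M.ar g :=
    congrArg Subtype.val (LinearMap.congr_fun hs (M.gen g))
  have h2 : s (M.gen g) * M.ar d = 0 := by
    rw [← map_op]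
    have : op (M.ar d) • M.gen g = 0 := Subtype.ext (by rw [op_gen, M.relation g d h]; rfl)
    rw [this, map_zero]
  have ht := hQ.1 g d h
  have h3 : s (M.gen g) * M.e (Q.tgt g) = s (M.gen g) := by
    rw [← map_op]
    congr 1
    exact Subtype.ext (by rw [op_gen, M.mul_tgt]; rfl)
  have h4 := M.annR d (s (M.gen g)) h2 (by rw [← ht, h3])
    { carrier := {x | ∀ v, M.ε v x = 0}
      zero_mem' := by simp
      add_mem' := by
        intro a b ha hb v
        rw [map_add, ha v, hb v, add_zero]
      neg_mem' := by
        intro a ha v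
        rw [map_neg, ha v, neg_zero] }
    (fun d' u _ v => M.eps_mul_ar v u d')
  exact M.no_loop g _ h1 h4

lemma iso_arrow (hQ : IsGentle Q) (g g' d : Q.A) (h : Q.rel g d)
    (φ : LinearMap.range (lm (M.ar g)) ≃ₗ[Bᵐᵒᵖ] LinearMap.range (lm (M.ar g'))) : g = g' := by
  obtain ⟨a, ha⟩ := M.exists_op_gen g' (φ (M.gen g))
  obtain ⟨b, hb⟩ := M.exists_op_gen g (φ.symm (M.gen g'))
  have hφ : φ (M.gen g) = op (a * M.e (Q.tgt g)) • M.gen g' := by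
    rw [← rsmS, ← ha, ← map_smul]
    congr 1
    exact Subtype.ext (by rw [op_gen, M.mul_tgt]; rfl)
  have hne : M.ε (Q.tgt g') (a * M.e (Q.tgt g)) ≠ 0 := by
    have h1 : φ (φ.symm (M.gen g')) = M.gen g' := φ.apply_symm_apply _
    rw [hb, map_smul, hφ, rsmS] at h1
    have h2 := M.eps_ne_of_loop g' _ (congrArg Subtype.val h1)
    intro h3
    rw [unop_op, map_mul, h3, zero_mul] at h2
    exact h2 rfl
  have ht : Q.tgt g' = Q.tgt g := by
    by_contra hc
    rw [map_mul, M.eps_e_ne _ _ hc, mul_zero] at hne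
    exact hne rfl
  set c := M.e (Q.tgt g') * a * M.e (Q.tgt g) with hcdef
  have hc0 : M.ar g' * c * M.ar d = 0 := by
    have h1 : op (M.ar d) • φ (M.gen g) = 0 := by
      rw [← map_smul]
      have : op (M.ar d) • M.gen g = 0 := Subtype.ext (by rw [op_gen, M.relation g d h]; rfl)
      rw [this, map_zero]
    rw [hφ, rsmS] at h1
    have h2 : M.ar g' * (a * M.e (Q.tgt g) * M.ar d) = 0 := congrArg Subtype.val h1
    rw [hcdef, mul_assoc (M.e _), ← mul_assoc (M.ar g'), M.mul_tgt, mul_assoc (M.ar g'), h2]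
  have hcε : M.ε (Q.tgt g) c ≠ 0 := by
    rw [hcdef, mul_assoc, map_mul, ht, M.eps_e, one_mul, ← ht]
    rw [ht] at hne ⊢
    exact hne
  have hct : M.e (Q.tgt g') * c = c := by
    rw [hcdef, ← mul_assoc, ← mul_assoc, M.idem]
  have hdt := hQ.1 g d h
  by_contra hgg
  have hr : ¬ Q.rel g' d := fun hr => hgg (gentle_pred_unique hQ h hr)
  have hk := M.annL g' (c * M.ar d) (by rw [← mul_assoc, hc0]) (by rw [← mul_assoc, hct])
    (M.prj d).ker
    (by
      intro x u hx
      rw [AddMonoidHom.mem_ker]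
      apply M.prj_ne
      rintro rfl
      exact hr hx)
  rw [AddMonoidHom.mem_ker] at hk
  have hrad : ∀ v, M.ε v (c - M.ε (Q.tgt g) c • M.e (Q.tgt g)) = 0 := by
    intro v
    rw [map_sub, map_smul]
    by_cases hv : v = Q.tgt g
    · subst hv
      simp [M.eps_e]
    · rw [M.eps_e_ne _ _ hv, smul_zero, sub_zero]
      exact M.eps_zero (Q.tgt g) v c (by rw [hcdef, mul_assoc, M.idem]) hv
  obtain ⟨u, hu⟩ := M.decL _ hrad
  have hc1 : c * M.ar d = M.ε (Q.tgt g) c • M.ar d + ∑ x, M.ar x * (u x * M.ar d) := by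
    have : c = M.ε (Q.tgt g) c • M.e (Q.tgt g) + ∑ x, M.ar x * u x := by rw [← hu]; abel
    conv_lhs => rw [this]
    rw [add_mul, smul_mul_assoc, hdt, M.src_mul, Finset.sum_mul]
    simp only [mul_assoc]
  rw [hc1, map_add, M.prj_sum] at hk
  have h5 : M.prj d (M.ε (Q.tgt g) c • M.ar d) = M.ε (Q.tgt g) c • M.ar d := by
    have := M.prj_same d (M.ε (Q.tgt g) c • 1)
    simpa using this
  rw [h5] at hk
  have h6 : M.ar d * (M.ε (Q.tgt g) c • 1 + u d * M.ar d) = 0 := by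
    rw [mul_add, mul_smul_comm, mul_one, hk]
  have h7 := M.isUnit_add _ hcε (u d * M.ar d) (fun v => M.eps_mul_ar v _ _)
  exact M.ar_ne d (h7.mul_left_eq_zero.1 h6)

/-- The projective module at a vertex. -/
def vm (v : Q.V) : Submodule Bᵐᵒᵖ B := LinearMap.range (lm (M.e v))

lemma mem_vm (v : Q.V) (x : B) : x ∈ M.vm v ↔ M.e v * x = x := by
  constructor
  · rintro ⟨y, rfl⟩
    rw [lm_apply, ← mul_assoc, M.idem]
  · intro h
    exact ⟨x, h⟩

lemma vm_proj (v : Q.V) : Module.Projective Bᵐᵒᵖ (M.vm v) := by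
  refine Module.Projective.of_split (M.vm v).subtype (lm (M.e v)).rangeRestrict ?_
  ext x
  exact (M.mem_vm v x.1).1 x.2

lemma gp_arrow (hQ : IsGentle Q) (g : Q.A) (h : OnOCFCycle Q g) :
    IsGorensteinProjective Bᵐᵒᵖ (LinearMap.range (lm (M.ar g))) := by
  obtain ⟨q, rfl, hq⟩ := seq_of_ocf h
  have hst : ∀ n, Q.tgt (q (n + 1)) = Q.src (q n) := fun n => hQ.1 _ _ (hq n)
  have hd : ∀ n : ℤ, ∀ x ∈ M.vm (Q.tgt (q n)), lm (M.ar (q n)) x ∈ M.vm (Q.tgt (q (n + 1))) := by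
    intro n x _
    rw [mem_vm, lm_apply, ← mul_assoc, hst, M.src_mul]
  refine ⟨fun n => ModuleCat.of _ (M.vm (Q.tgt (q n))),
    fun n => (lm (M.ar (q n))).restrict (hd n), fun n => M.vm_proj _, ?_, ?_, ?_⟩
  · intro n x
    constructor
    · intro hx
      have hx0 : M.ar (q (n + 1)) * x.1 = 0 := congrArg Subtype.val hx
      have := M.annL (q (n + 1)) x.1 hx0 ((M.mem_vm _ _).1 x.2)
        (LinearMap.range (lm (M.ar (q n)))).toAddSubgroup
        (by
          intro d u hr
          rw [gentle_succ_unique hQ hr (hq n)]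
          exact ⟨u, rfl⟩)
      obtain ⟨u, hu⟩ := this
      refine ⟨⟨M.e (Q.tgt (q n)) * u, ⟨u, rfl⟩⟩, ?_⟩
      apply Subtype.ext
      change M.ar (q n) * (M.e (Q.tgt (q n)) * u) = x.1
      rw [← mul_assoc, M.mul_tgt]
      exact hu
    · rintro ⟨y, rfl⟩
      apply Subtype.ext
      change M.ar (q (n + 1)) * (M.ar (q n) * y.1) = 0
      rw [← mul_assoc, M.relation _ _ (hq n), zero_mul]
  · intro n f
    constructor
    · intro hf
      let en : M.vm (Q.tgt (q n)) := ⟨M.e _, (M.mem_vm _ _).2 (M.idem _)⟩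
      let et : M.vm (Q.tgt (q (n + 1))) := ⟨M.e _, (M.mem_vm _ _).2 (M.idem _)⟩
      let F : M.vm (Q.tgt (q (n + 1))) →ₗ[Bᵐᵒᵖ] Bᵐᵒᵖ := f
      have hF : ∀ x : M.vm (Q.tgt (q (n + 1))), F x = op (unop (F et) * x.1) := by
        intro x
        have h1 : x = op x.1 • et := Subtype.ext ((M.mem_vm _ _).1 x.2).symm
        conv_lhs => rw [h1, map_smul]
        rw [smul_eq_mul, op_mul, op_unop]
      have h2 : unop (F et) * M.ar (q n) = 0 := by
        have h3 : F ((lm (M.ar (q n))).restrict (hd n) en) = 0 := LinearMap.congr_fun hf en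
        rw [hF] at h3
        have h4 := congrArg unop h3
        rw [unop_op] at h4
        have h5 : (((lm (M.ar (q n))).restrict (hd n) en : M.vm _) : B) = M.ar (q n) :=
          M.mul_tgt (q n)
        rw [h5] at h4
        exact h4
      have h6 : unop (F et) * M.e (Q.src (q n)) = unop (F et) := by
        have h7 := congrArg unop (hF et)
        rw [unop_op] at h7
        rw [← hst]
        exact h7.symm
      have h8 := M.annR (q n) _ h2 h6
        { carrier := {x | ∃ u, u * M.ar (q (n + 1)) = x}
          zero_mem' := ⟨0, zero_mul _⟩
          add_mem' := by
            rintro _ _ ⟨u, rfl⟩ ⟨v, rfl⟩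
            exact ⟨u + v, add_mul _ _ _⟩
          neg_mem' := by
            rintro _ ⟨u, rfl⟩
            exact ⟨-u, neg_mul _ _⟩ }
        (by
          intro d u hr
          rw [gentle_pred_unique hQ hr (hq n)]
          exact ⟨u, rfl⟩)
      obtain ⟨u, hu⟩ := h8
      let F' : M.vm (Q.tgt (q (n + 1 + 1))) →ₗ[Bᵐᵒᵖ] Bᵐᵒᵖ :=
        { toFun := fun x => op (u * x.1)
          map_add' := fun x y => by simp [mul_add]
          map_smul' := fun r x => by
            induction r using MulOpposite.rec' with
            | h r => simp [mul_assoc] }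
      refine ⟨F', ?_⟩
      apply LinearMap.ext
      intro x
      have h9 := hF x
      rw [← hu] at h9
      refine Eq.trans ?_ h9.symm
      change op (u * (M.ar (q (n + 1)) * (x : M.vm _).1)) = _
      rw [← mul_assoc]
    · rintro ⟨f', rfl⟩
      apply LinearMap.ext
      intro x
      let F' : M.vm (Q.tgt (q (n + 1 + 1))) →ₗ[Bᵐᵒᵖ] Bᵐᵒᵖ := f'
      change F' _ = 0
      rw [← map_zero F']
      congr 1
      apply Subtype.ext
      change M.ar (q (n + 1)) * (M.ar (q n) * (x : M.vm _).1) = 0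
      rw [← mul_assoc, M.relation _ _ (hq n), zero_mul]
  · have hmap : LinearMap.range (lm (M.ar (q (-1)))) =
        (LinearMap.range ((lm (M.ar (q (-1)))).restrict (hd (-1)))).map (M.vm _).subtype := by
      ext x
      constructor
      · rintro ⟨y, rfl⟩
        refine ⟨_, ⟨⟨M.e _ * y, ⟨y, rfl⟩⟩, rfl⟩, ?_⟩
        change M.ar (q (-1)) * (M.e _ * y) = M.ar (q (-1)) * y
        rw [← mul_assoc, M.mul_tgt]
      · rintro ⟨_, ⟨y, rfl⟩, rfl⟩
        exact ⟨y.1, rfl⟩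
    exact ⟨(LinearEquiv.ofEq _ _ hmap).trans (Submodule.equivSubtypeMap _ _).symm⟩

lemma npgp_arrow (hQ : IsGentle Q) (g : Q.A) (h : OnOCFCycle Q g) :
    IsIndecNonProjGP Bᵐᵒᵖ (LinearMap.range (lm (M.ar g))) := by
  refine ⟨M.indec_arrow g, M.gp_arrow hQ g h, ?_⟩
  obtain ⟨q, rfl, hq⟩ := seq_of_ocf h
  exact M.nonproj_arrow hQ _ (q (-1 - 1)) (by simpa using hq (-1 - 1))

lemma inj_arrow (hQ : IsGentle Q) (g g' : Q.A) (h : OnOCFCycle Q g)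
    (φ : LinearMap.range (lm (M.ar g)) ≃ₗ[Bᵐᵒᵖ] LinearMap.range (lm (M.ar g'))) : g = g' := by
  obtain ⟨q, rfl, hq⟩ := seq_of_ocf h
  exact M.iso_arrow hQ _ g' (q (-1 - 1)) (by simpa using hq (-1 - 1)) φ

end GM

lemma card_of_GM (hQ : IsGentle Q) (M : GM k Q (GentleAlgebra k Q)) :
    numIndecNonProjGP k Q = Set.ncard {a : Q.A | OnOCFCycle Q a} := by
  rw [← Nat.card_coe_set_eq, numIndecNonProjGP]
  symm
  refine Nat.card_congr (Equiv.ofBijective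
    (fun a : {a : Q.A | OnOCFCycle Q a} =>
      (Quotient.mk (npgpSetoid k Q) ⟨_, M.npgp_arrow hQ a.1 a.2⟩)) ⟨?_, ?_⟩)
  · intro a b hab
    obtain ⟨φ⟩ := Quotient.exact hab
    exact Subtype.ext (M.inj_arrow hQ a.1 b.1 a.2 φ)
  · intro x
    induction x using Quotient.inductionOn with
    | h x =>
      obtain ⟨g, hg, ⟨φ⟩⟩ := M.from_gp hQ x.2
      exact ⟨⟨g, hg⟩, Quotient.sound ⟨φ.symm⟩⟩

end GenericTwo

section Concrete

variable (k : Type) [Field k] (Q : GentleData)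

/-- Composable pairs of arrows which are not relations. -/
def RR (a b : Q.A) : Prop := Q.tgt a = Q.src b ∧ ¬ Q.rel a b

/-- Formal paths. -/
abbrev PX : Type := Q.V × List Q.A

open Classical in
/-- Action of a generator on a formal path. -/
noncomputable def actB : GenSym Q → PX Q → (PX Q →₀ k)
  | GenSym.vertex v, p => if p.1 = v then Finsupp.single p 1 else 0
  | GenSym.arrow g, p => if p.1 = Q.tgt g ∧ ∀ b ∈ p.2.head?, RR Q g b then
      Finsupp.single (Q.src g, g :: p.2) 1 else 0

/-- Action of a generator. -/
noncomputable def actG (s : GenSym Q) : Module.End k (PX Q →₀ k) :=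
  Finsupp.linearCombination k (actB k Q s)

open Classical in
/-- Right multiplication by an arrow on a formal path. -/
noncomputable def rhoB (g : Q.A) (p : PX Q) : PX Q →₀ k :=
  if (p.2 = [] → p.1 = Q.src g) ∧ ∀ b ∈ p.2.getLast?, RR Q b g then
    Finsupp.single (p.1, p.2 ++ [g]) 1 else 0

/-- Right multiplication by an arrow. -/
noncomputable def rho (g : Q.A) : Module.End k (PX Q →₀ k) :=
  Finsupp.linearCombination k (rhoB k Q g)

variable {k Q}

lemma actG_single (s : GenSym Q) (p : PX Q) (c : k) :
    actG k Q s (Finsupp.single p c) = c • actB k Q s p := by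
  simp [actG]

lemma rho_single (g : Q.A) (p : PX Q) (c : k) :
    rho k Q g (Finsupp.single p c) = c • rhoB k Q g p := by
  simp [rho]

lemma end_ext {f g : Module.End k (PX Q →₀ k)}
    (h : ∀ p, f (Finsupp.single p 1) = g (Finsupp.single p 1)) : f = g := by
  apply Finsupp.lhom_ext'
  intro p
  ext1
  exact h p

lemma actG_rel {x y : FreeAlgebra k (GenSym Q)} (h : GentleRel k Q x y) :
    FreeAlgebra.lift k (actG k Q) x = FreeAlgebra.lift k (actG k Q) y := by
  apply end_ext
  intro p
  induction h with
  | idem v =>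
    simp only [map_mul, FreeAlgebra.lift_ι_apply, Module.End.mul_apply, actG_single, one_smul, actB]
    split_ifs with h
    · simp [actG_single, actB, h]
    · simp
  | orth v w h =>
    simp only [map_mul, FreeAlgebra.lift_ι_apply, Module.End.mul_apply, actG_single, one_smul, actB,
      map_zero, LinearMap.zero_apply]
    split_ifs with h1
    · simp only [actG_single, actB, one_smul]
      rw [if_neg]
      rintro rfl
      exact h h1
    · simp
  | sum_idem =>
    simp only [map_sum, FreeAlgebra.lift_ι_apply, LinearMap.sum_apply, actG_single, one_smul, actB,
      map_one, Module.End.one_apply]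
    simp
  | src_mul a =>
    simp only [map_mul, FreeAlgebra.lift_ι_apply, Module.End.mul_apply, actG_single, one_smul, actB]
    split_ifs with h
    · simp [actG_single, actB]
    · simp
  | mul_tgt a =>
    simp only [map_mul, FreeAlgebra.lift_ι_apply, Module.End.mul_apply, actG_single, one_smul, actB]
    by_cases h : p.1 = Q.tgt a
    · rw [if_pos h]
      simp [actG_single, actB]
    · rw [if_neg h, if_neg (fun h' => h h'.1), map_zero]
  | relation a b h =>
    simp only [map_mul, FreeAlgebra.lift_ι_apply, Module.End.mul_apply, actG_single, one_smul, actB,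
      map_zero, LinearMap.zero_apply]
    split_ifs with h1
    · simp only [actG_single, actB, one_smul]
      rw [if_neg]
      rintro ⟨_, h2⟩
      exact (h2 b rfl).2 h
    · simp

variable (k Q)

/-- The path representation. -/
noncomputable def Phi : GentleAlgebra k Q →ₐ[k] Module.End k (PX Q →₀ k) :=
  RingQuot.liftAlgHom k ⟨FreeAlgebra.lift k (actG k Q), fun _ _ h => actG_rel h⟩

/-- The augmentations. -/
noncomputable def epsC (v : Q.V) : GentleAlgebra k Q →ₐ[k] k :=
  RingQuot.liftAlgHom k ⟨FreeAlgebra.lift k (fun s => match s with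
    | GenSym.vertex w => if w = v then (1 : k) else 0
    | GenSym.arrow _ => 0), fun x y h => by
      induction h with
      | idem w => simp
      | orth w w' h =>
        simp only [map_mul, FreeAlgebra.lift_ι_apply, map_zero, mul_ite, mul_one, mul_zero]
        split_ifs with h1 h2
        · exact absurd (h2.trans h1.symm) h
        · rfl
        · rfl
      | sum_idem => simp
      | src_mul a => simp
      | mul_tgt a => simp
      | relation a b h => simp⟩

variable {k Q}

lemma Phi_gen (s : GenSym Q) : Phi k Q (ofGen k Q s) = actG k Q s := by
  simp [Phi, ofGen]

lemma eps_vertex (v w : Q.V) : epsC k Q v (idemOf k Q w) = if w = v then 1 else 0 := by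
  simp [epsC, idemOf, ofGen]

lemma eps_arrow (v : Q.V) (a : Q.A) : epsC k Q v (arrOf k Q a) = 0 := by
  simp [epsC, arrOf, ofGen]

lemma gen_induction {C : GentleAlgebra k Q → Prop} (hc : ∀ c : k, C (algebraMap _ _ c))
    (hg : ∀ s, C (ofGen k Q s)) (hm : ∀ a b, C a → C b → C (a * b))
    (ha : ∀ a b, C a → C b → C (a + b)) (a : GentleAlgebra k Q) : C a := by
  obtain ⟨x, rfl⟩ := RingQuot.mkAlgHom_surjective k (GentleRel k Q) a
  induction x using FreeAlgebra.induction with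
  | grade0 r => simpa using hc r
  | grade1 s => exact hg s
  | mul a b h1 h2 => rw [map_mul]; exact hm _ _ h1 h2
  | add a b h1 h2 => rw [map_add]; exact ha _ _ h1 h2

lemma c_idem (v : Q.V) : idemOf k Q v * idemOf k Q v = idemOf k Q v := by
  have := RingQuot.mkAlgHom_rel k (GentleRel.idem (k := k) v)
  simpa [idemOf, ofGen] using this

lemma c_orth (v w : Q.V) (h : v ≠ w) : idemOf k Q v * idemOf k Q w = 0 := by
  have := RingQuot.mkAlgHom_rel k (GentleRel.orth (k := k) v w h)
  simpa [idemOf, ofGen] using this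

lemma c_sum : ∑ v, idemOf k Q v = 1 := by
  have := RingQuot.mkAlgHom_rel k (GentleRel.sum_idem (k := k) (Q := Q))
  simpa [idemOf, ofGen] using this

lemma c_src (a : Q.A) : idemOf k Q (Q.src a) * arrOf k Q a = arrOf k Q a := by
  have := RingQuot.mkAlgHom_rel k (GentleRel.src_mul (k := k) a)
  simpa [idemOf, arrOf, ofGen] using this

lemma c_tgt (a : Q.A) : arrOf k Q a * idemOf k Q (Q.tgt a) = arrOf k Q a := by
  have := RingQuot.mkAlgHom_rel k (GentleRel.mul_tgt (k := k) a)
  simpa [idemOf, arrOf, ofGen] using this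

lemma c_rel (a b : Q.A) (h : Q.rel a b) : arrOf k Q a * arrOf k Q b = 0 := by
  have := RingQuot.mkAlgHom_rel k (GentleRel.relation (k := k) a b h)
  simpa [idemOf, arrOf, ofGen] using this

lemma c_src_ne (v : Q.V) (a : Q.A) (h : v ≠ Q.src a) : idemOf k Q v * arrOf k Q a = 0 := by
  rw [← c_src, ← mul_assoc, c_orth _ _ h, zero_mul]

lemma c_tgt_ne (v : Q.V) (a : Q.A) (h : Q.tgt a ≠ v) : arrOf k Q a * idemOf k Q v = 0 := by
  rw [← c_tgt, mul_assoc, c_orth _ _ h, mul_zero]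

lemma c_not_RR (a b : Q.A) (h : ¬ RR Q a b) : arrOf k Q a * arrOf k Q b = 0 := by
  by_cases h1 : Q.tgt a = Q.src b
  · exact c_rel a b (by
      by_contra h2
      exact h ⟨h1, h2⟩)
  · rw [← c_src b, ← mul_assoc, c_tgt_ne _ _ h1, zero_mul]

variable (k Q)

/-- The value of a formal path. -/
noncomputable def pv (p : PX Q) : GentleAlgebra k Q :=
  idemOf k Q p.1 * (p.2.map (arrOf k Q)).prod

/-- The value of a combination of formal paths. -/
noncomputable def WW : (PX Q →₀ k) →ₗ[k] GentleAlgebra k Q :=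
  Finsupp.linearCombination k (pv k Q)

/-- The sum of the trivial paths. -/
noncomputable def xi : PX Q →₀ k := ∑ v : Q.V, Finsupp.single (v, []) 1

/-- The coefficients in the basis of paths. -/
noncomputable def coef (a : GentleAlgebra k Q) : PX Q →₀ k := Phi k Q a (xi k Q)

variable {k Q}

lemma WW_single (p : PX Q) (c : k) : WW k Q (Finsupp.single p c) = c • pv k Q p := by
  simp [WW]

lemma WW_gen (s : GenSym Q) (p : PX Q) : WW k Q (actB k Q s p) = ofGen k Q s * pv k Q p := by
  obtain ⟨w, l⟩ := p
  cases s with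
  | vertex v =>
    change _ = idemOf k Q v * _
    simp only [actB]
    split_ifs with h
    · subst h
      rw [WW_single, one_smul, pv, ← mul_assoc, c_idem]
    · rw [map_zero, pv, ← mul_assoc, c_orth _ _ (Ne.symm h), zero_mul]
  | arrow g =>
    change _ = arrOf k Q g * _
    simp only [actB]
    split_ifs with h
    · obtain ⟨rfl, _⟩ := h
      rw [WW_single, one_smul, pv, pv, ← mul_assoc, c_tgt, List.map_cons, List.prod_cons,
        ← mul_assoc, c_src]
    · rw [map_zero, pv, ← mul_assoc]
      by_cases h1 : w = Q.tgt g
      · subst h1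
        rw [c_tgt]
        cases l with
        | nil => simp at h
        | cons b l =>
          rw [List.map_cons, List.prod_cons, ← mul_assoc, c_not_RR g b, zero_mul]
          intro hb
          apply h
          simpa using hb
      · rw [c_tgt_ne _ _ (Ne.symm h1), zero_mul]

lemma WW_Phi (a : GentleAlgebra k Q) : ∀ x, WW k Q (Phi k Q a x) = a * WW k Q x := by
  induction a using gen_induction with
  | hc c =>
    intro x
    rw [AlgHom.commutes, Module.algebraMap_end_apply, map_smul, Algebra.smul_def]
  | hg s =>
    intro x
    rw [Phi_gen]
    induction x using Finsupp.induction_linear with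
    | zero => simp
    | add x y hx hy => rw [map_add, map_add, hx, hy, map_add, mul_add]
    | single p c =>
      rw [actG_single, map_smul, WW_gen, WW_single, mul_smul_comm]
  | hm a b ha hb =>
    intro x
    rw [map_mul, Module.End.mul_apply, ha, hb, mul_assoc]
  | ha a b ha hb =>
    intro x
    rw [map_add, LinearMap.add_apply, map_add, ha, hb, add_mul]

lemma WW_xi : WW k Q (xi k Q) = 1 := by
  rw [xi, map_sum, ← c_sum]
  refine Finset.sum_congr rfl fun v _ => ?_
  rw [WW_single, one_smul, pv]
  simp

lemma WW_coef (a : GentleAlgebra k Q) : WW k Q (coef k Q a) = a := by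
  rw [coef, WW_Phi, WW_xi, mul_one]

lemma coef_add (a b : GentleAlgebra k Q) : coef k Q (a + b) = coef k Q a + coef k Q b := by
  simp [coef]

lemma coef_zero : coef k Q 0 = 0 := by simp [coef]

lemma coef_inj {a : GentleAlgebra k Q} (h : coef k Q a = 0) : a = 0 := by
  rw [← WW_coef a, h, map_zero]

lemma coef_sum {ι : Type} (s : Finset ι) (f : ι → GentleAlgebra k Q) :
    coef k Q (∑ i ∈ s, f i) = ∑ i ∈ s, coef k Q (f i) := by
  simp [coef, LinearMap.sum_apply]

lemma coef_mul (a b : GentleAlgebra k Q) : coef k Q (a * b) = Phi k Q a (coef k Q b) := by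
  simp [coef]

lemma Phi_arr (g : Q.A) : Phi k Q (arrOf k Q g) = actG k Q (GenSym.arrow g) := Phi_gen _

lemma rho_actB (g : Q.A) (s : GenSym Q) (p : PX Q) :
    rho k Q g (actB k Q s p) = actG k Q s (rhoB k Q g p) := by
  obtain ⟨w, l⟩ := p
  cases s with
  | vertex v =>
    by_cases h : w = v
    · subst h
      simp only [actB, if_true, rho_single, one_smul, rhoB]
      split_ifs
      · simp [actG_single, actB]
      · simp
    · simp only [actB, if_neg h, rhoB]
      split_ifs
      · simp [actG_single, actB, h]
      · simp
  | arrow a =>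
    classical
    have key : ((w = Q.tgt a ∧ ∀ b ∈ l.head?, RR Q a b) ∧
        ((a :: l = [] → Q.src a = Q.src g) ∧ ∀ b ∈ (a :: l).getLast?, RR Q b g)) ↔
        (((l = [] → w = Q.src g) ∧ ∀ b ∈ l.getLast?, RR Q b g) ∧
          (w = Q.tgt a ∧ ∀ b ∈ (l ++ [g]).head?, RR Q a b)) := by
      rcases l with _ | ⟨b, l⟩
      · simp
        intro h1 h2
        exact h1.trans h2.1
      · simp [List.getLast?_cons_cons]
        tauto
    have h1 : rho k Q g (actB k Q (GenSym.arrow a) (w, l)) =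
        if ((w = Q.tgt a ∧ ∀ b ∈ l.head?, RR Q a b) ∧
        ((a :: l = [] → Q.src a = Q.src g) ∧ ∀ b ∈ (a :: l).getLast?, RR Q b g)) then
          Finsupp.single (Q.src a, a :: l ++ [g]) 1 else 0 := by
      rw [ite_and]
      simp only [actB]
      split_ifs with h2 h3
      · rw [rho_single, one_smul, rhoB]
        exact if_pos (by simpa using h3)
      · rw [rho_single, one_smul, rhoB]
        exact if_neg (by simpa using h3)
      · rw [map_zero]
    have h2 : actG k Q (GenSym.arrow a) (rhoB k Q g (w, l)) =
        if (((l = [] → w = Q.src g) ∧ ∀ b ∈ l.getLast?, RR Q b g) ∧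
          (w = Q.tgt a ∧ ∀ b ∈ (l ++ [g]).head?, RR Q a b)) then
          Finsupp.single (Q.src a, a :: l ++ [g]) 1 else 0 := by
      rw [ite_and]
      simp only [rhoB]
      split_ifs with h2 h3
      · rw [actG_single, one_smul]
        simp only [actB]
        rw [if_pos h3]
        rfl
      · rw [actG_single, one_smul]
        simp only [actB]
        rw [if_neg h3]
      · rw [map_zero]
    rw [h1, h2]
    exact if_congr key rfl rfl

lemma rho_Phi (g : Q.A) (a : GentleAlgebra k Q) :
    ∀ x, rho k Q g (Phi k Q a x) = Phi k Q a (rho k Q g x) := by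
  induction a using gen_induction with
  | hc c =>
    intro x
    rw [AlgHom.commutes, Module.algebraMap_end_apply, map_smul, Module.algebraMap_end_apply]
  | hg s =>
    intro x
    rw [Phi_gen]
    induction x using Finsupp.induction_linear with
    | zero => simp
    | add x y hx hy => rw [map_add, map_add, hx, hy, map_add, map_add]
    | single p c =>
      rw [actG_single, map_smul, rho_actB, rho_single, map_smul]
  | hm a b ha hb =>
    intro x
    rw [map_mul, Module.End.mul_apply, ha, hb, Module.End.mul_apply]
  | ha a b ha hb =>
    intro x
    rw [map_add, LinearMap.add_apply, map_add, ha, hb, LinearMap.add_apply]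

lemma coef_arr (g : Q.A) : coef k Q (arrOf k Q g) = Finsupp.single (Q.src g, [g]) 1 := by
  rw [coef, Phi_arr, xi, map_sum, Finset.sum_eq_single (Q.tgt g)]
  · rw [actG_single]
    simp [actB]
  · intro v _ hv
    rw [actG_single]
    simp [actB, hv]
  · simp

lemma rho_xi (g : Q.A) : rho k Q g (xi k Q) = Finsupp.single (Q.src g, [g]) 1 := by
  rw [xi, map_sum, Finset.sum_eq_single (Q.src g)]
  · rw [rho_single]
    simp [rhoB]
  · intro v _ hv
    rw [rho_single]
    simp [rhoB, hv]
  · simp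

lemma coef_mul_arr (a : GentleAlgebra k Q) (g : Q.A) :
    coef k Q (a * arrOf k Q g) = rho k Q g (coef k Q a) := by
  rw [coef_mul, coef_arr, ← rho_xi, ← rho_Phi, coef]

lemma coef_arr_mul (a : GentleAlgebra k Q) (g : Q.A) :
    coef k Q (arrOf k Q g * a) = actG k Q (GenSym.arrow g) (coef k Q a) := by
  rw [coef_mul, Phi_arr]

open Classical in
lemma filter_act (g g' : Q.A) (x : PX Q →₀ k) :
    (actG k Q (GenSym.arrow g') x).filter (fun p => p.2.head? = some g) =
      if g = g' then actG k Q (GenSym.arrow g') x else 0 := by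
  induction x using Finsupp.induction_linear with
  | zero => simp [Finsupp.filter_zero]
  | add x y hx hy =>
    rw [map_add, Finsupp.filter_add, hx, hy]
    split_ifs <;> simp
  | single p c =>
    rw [actG_single, Finsupp.filter_smul]
    simp only [actB]
    split_ifs with h1 h2 h2
    · subst h2
      rw [Finsupp.filter_single_of_pos]
      simp
    · rw [Finsupp.filter_single_of_neg, smul_zero]
      simpa using Ne.symm h2
    · simp [Finsupp.filter_zero]
    · simp [Finsupp.filter_zero]

open Classical in
lemma filter_rho (g g' : Q.A) (x : PX Q →₀ k) :
    (rho k Q g' x).filter (fun p => p.2.getLast? = some g) =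
      if g = g' then rho k Q g' x else 0 := by
  induction x using Finsupp.induction_linear with
  | zero => simp [Finsupp.filter_zero]
  | add x y hx hy =>
    rw [map_add, Finsupp.filter_add, hx, hy]
    split_ifs <;> simp
  | single p c =>
    rw [rho_single, Finsupp.filter_smul]
    simp only [rhoB]
    split_ifs with h1 h2 h2
    · subst h2
      rw [Finsupp.filter_single_of_pos]
      simp
    · rw [Finsupp.filter_single_of_neg, smul_zero]
      simpa using Ne.symm h2
    · simp [Finsupp.filter_zero]
    · simp [Finsupp.filter_zero]

open Classical in
lemma act_apply (g : Q.A) (l : List Q.A) (h : ∀ b ∈ l.head?, RR Q g b) (x : PX Q →₀ k) :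
    actG k Q (GenSym.arrow g) x (Q.src g, g :: l) = x (Q.tgt g, l) := by
  induction x using Finsupp.induction_linear with
  | zero => simp
  | add x y hx hy => rw [map_add, Finsupp.add_apply, hx, hy, Finsupp.add_apply]
  | single p c =>
    obtain ⟨w, m⟩ := p
    rw [actG_single]
    simp only [actB]
    split_ifs with h1
    · obtain ⟨rfl, _⟩ := h1
      simp [Finsupp.single_apply]
    · rw [smul_zero, Finsupp.zero_apply, Finsupp.single_apply, if_neg]
      intro h2
      obtain ⟨rfl, rfl⟩ := Prod.mk.inj h2
      exact h1 ⟨rfl, h⟩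

open Classical in
lemma rho_apply (g : Q.A) (v : Q.V) (l : List Q.A) (h0 : l = [] → v = Q.src g)
    (h : ∀ b ∈ l.getLast?, RR Q b g) (x : PX Q →₀ k) :
    rho k Q g x (v, l ++ [g]) = x (v, l) := by
  induction x using Finsupp.induction_linear with
  | zero => simp
  | add x y hx hy => rw [map_add, Finsupp.add_apply, hx, hy, Finsupp.add_apply]
  | single p c =>
    obtain ⟨w, m⟩ := p
    rw [rho_single]
    simp only [rhoB]
    split_ifs with h1
    · simp [Finsupp.single_apply]
    · rw [smul_zero, Finsupp.zero_apply, Finsupp.single_apply, if_neg]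
      intro h2
      obtain ⟨rfl, rfl⟩ := Prod.mk.inj h2
      exact h1 ⟨h0, h⟩

lemma sum_coef (a : GentleAlgebra k Q) :
    a = ∑ p ∈ (coef k Q a).support, (coef k Q a p) • pv k Q p := by
  conv_lhs => rw [← WW_coef a]
  rw [WW, Finsupp.linearCombination_apply, Finsupp.sum]

lemma c_annL (g : Q.A) (a : GentleAlgebra k Q) (h : arrOf k Q g * a = 0)
    (ht : idemOf k Q (Q.tgt g) * a = a) (S : AddSubgroup (GentleAlgebra k Q))
    (hS : ∀ d u, Q.rel g d → arrOf k Q d * u ∈ S) : a ∈ S := by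
  rw [← ht, sum_coef a, Finset.mul_sum]
  refine sum_mem ?_
  rintro ⟨w, l⟩ hp
  rw [Finsupp.mem_support_iff] at hp
  rw [mul_smul_comm, pv, ← mul_assoc]
  by_cases hw : Q.tgt g = w
  · subst hw
    have hc : ¬ ∀ b ∈ l.head?, RR Q g b := by
      intro hc
      apply hp
      rw [← act_apply g l hc, ← coef_arr_mul, h, coef_zero, Finsupp.zero_apply]
    rcases l with _ | ⟨b, l⟩
    · simp at hc
    · have hb : ¬ RR Q g b := by simpa using hc
      rw [c_idem, List.map_cons, List.prod_cons, ← mul_assoc]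
      by_cases hs : Q.tgt g = Q.src b
      · rw [hs, c_src, ← mul_smul_comm]
        apply hS
        by_contra h2
        exact hb ⟨hs, h2⟩
      · rw [c_src_ne _ _ hs, zero_mul, smul_zero]
        exact zero_mem _
  · rw [c_orth _ _ hw, zero_mul, smul_zero]
    exact zero_mem _

lemma c_annR (g : Q.A) (a : GentleAlgebra k Q) (h : a * arrOf k Q g = 0)
    (ht : a * idemOf k Q (Q.src g) = a) (S : AddSubgroup (GentleAlgebra k Q))
    (hS : ∀ d u, Q.rel d g → u * arrOf k Q d ∈ S) : a ∈ S := by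
  rw [← ht, sum_coef a, Finset.sum_mul]
  refine sum_mem ?_
  rintro ⟨w, l⟩ hp
  rw [Finsupp.mem_support_iff] at hp
  have hc : (l = [] → w = Q.src g) → ¬ ∀ b ∈ l.getLast?, RR Q b g := by
    intro h0 hc
    apply hp
    rw [← rho_apply g w l h0 hc, ← coef_mul_arr, h, coef_zero, Finsupp.zero_apply]
  rw [pv]
  rcases List.eq_nil_or_concat l with rfl | ⟨l, b, rfl⟩
  · by_cases hw : w = Q.src g
    · simp [hw] at hc
    · simp [c_orth _ _ hw]
  · have hb : ¬ RR Q b g := by simpa using hc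
    simp only [List.map_append, List.prod_append, List.map_cons, List.map_nil, List.prod_cons,
      List.prod_nil, mul_one, List.concat_eq_append]
    rw [smul_mul_assoc, ← mul_assoc, mul_assoc _ (arrOf k Q b)]
    by_cases hs : Q.tgt b = Q.src g
    · rw [← hs, c_tgt, ← smul_mul_assoc]
      apply hS
      by_contra h2
      exact hb ⟨hs, h2⟩
    · rw [c_tgt_ne _ _ hs, mul_zero, smul_zero]
      exact zero_mem _

lemma decL_aux (x : PX Q →₀ k) : ∃ u : Q.A → GentleAlgebra k Q,
    WW k Q x - ∑ v, epsC k Q v (WW k Q x) • idemOf k Q v = ∑ g, arrOf k Q g * u g := by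
  classical
  induction x using Finsupp.induction_linear with
  | zero => exact ⟨0, by simp⟩
  | add x y hx hy =>
    obtain ⟨u, hu⟩ := hx
    obtain ⟨v, hv⟩ := hy
    refine ⟨u + v, ?_⟩
    simp only [map_add, add_smul, Finset.sum_add_distrib, Pi.add_apply, mul_add]
    rw [← hu, ← hv]
    abel
  | single p c =>
    obtain ⟨w, l⟩ := p
    rw [WW_single, pv]
    rcases l with _ | ⟨b, l⟩
    · refine ⟨0, ?_⟩
      simp [eps_vertex]
    · refine ⟨Pi.single b (if w = Q.src b then c • (l.map (arrOf k Q)).prod else 0), ?_⟩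
      simp only [List.map_cons, List.prod_cons]
      rw [Finset.sum_eq_zero (s := Finset.univ), sub_zero, Finset.sum_eq_single b]
      · rw [Pi.single_eq_same, ← mul_assoc]
        split_ifs with hw
        · rw [hw, c_src, mul_smul_comm]
        · rw [c_src_ne _ _ hw]
          simp
      · intro d _ hd
        rw [Pi.single_eq_of_ne hd, mul_zero]
      · simp
      · intro v _
        simp [eps_arrow]

lemma decR_aux (x : PX Q →₀ k) : ∃ u : Q.A → GentleAlgebra k Q,
    WW k Q x - ∑ v, epsC k Q v (WW k Q x) • idemOf k Q v = ∑ g, u g * arrOf k Q g := by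
  classical
  induction x using Finsupp.induction_linear with
  | zero => exact ⟨0, by simp⟩
  | add x y hx hy =>
    obtain ⟨u, hu⟩ := hx
    obtain ⟨v, hv⟩ := hy
    refine ⟨u + v, ?_⟩
    simp only [map_add, add_smul, Finset.sum_add_distrib, Pi.add_apply, add_mul]
    rw [← hu, ← hv]
    abel
  | single p c =>
    obtain ⟨w, l⟩ := p
    rw [WW_single, pv]
    rcases List.eq_nil_or_concat l with rfl | ⟨l, b, rfl⟩
    · refine ⟨0, ?_⟩
      simp [eps_vertex]
    · refine ⟨Pi.single b (c • (idemOf k Q w * (l.map (arrOf k Q)).prod)), ?_⟩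
      simp only [List.map_append, List.prod_append, List.map_cons, List.map_nil, List.prod_cons,
        List.prod_nil, mul_one, List.concat_eq_append]
      rw [Finset.sum_eq_zero (s := Finset.univ), sub_zero, Finset.sum_eq_single b]
      · rw [Pi.single_eq_same, smul_mul_assoc, mul_assoc]
      · intro d _ hd
        rw [Pi.single_eq_of_ne hd, zero_mul]
      · simp
      · intro v _
        simp [eps_arrow]

lemma c_decL (a : GentleAlgebra k Q) (h : ∀ v, epsC k Q v a = 0) :
    ∃ u : Q.A → GentleAlgebra k Q, a = ∑ g, arrOf k Q g * u g := by
  obtain ⟨u, hu⟩ := decL_aux (coef k Q a)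
  refine ⟨u, ?_⟩
  rw [WW_coef] at hu
  simpa [h] using hu

lemma c_decR (a : GentleAlgebra k Q) (h : ∀ v, epsC k Q v a = 0) :
    ∃ u : Q.A → GentleAlgebra k Q, a = ∑ g, u g * arrOf k Q g := by
  obtain ⟨u, hu⟩ := decR_aux (coef k Q a)
  refine ⟨u, ?_⟩
  rw [WW_coef] at hu
  simpa [h] using hu

variable (k Q)

/-- The filtration by length. -/
noncomputable def FF (n : ℕ) : Submodule k (PX Q →₀ k) :=
  Finsupp.supported k k {p | p.2.IsChain (RR Q) ∧ n ≤ p.2.length}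

variable {k Q}

lemma act_mem (s : GenSym Q) (n m : ℕ) (hm : m ≤ n ∨ (m ≤ n + 1 ∧ ∃ g, s = GenSym.arrow g))
    (x : PX Q →₀ k) (hx : x ∈ FF k Q n) : actG k Q s x ∈ FF k Q m := by
  rw [actG, Finsupp.linearCombination_apply, Finsupp.sum]
  refine sum_mem ?_
  rintro ⟨w, l⟩ hp
  obtain ⟨h1, h2⟩ := (Finsupp.mem_supported k x).1 hx hp
  apply Submodule.smul_mem
  simp only at h1 h2
  cases s with
  | vertex v =>
    simp only [actB]
    split_ifs
    · refine Finsupp.single_mem_supported k 1 ⟨h1, ?_⟩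
      rcases hm with hm | ⟨_, g, hg⟩
      · exact hm.trans h2
      · cases hg
    · exact zero_mem _
  | arrow g =>
    simp only [actB]
    split_ifs with h
    · refine Finsupp.single_mem_supported k 1 ⟨List.isChain_cons.2 ⟨h.2, h1⟩, ?_⟩
      simp only [List.length_cons]
      rcases hm with hm | ⟨hm, _⟩ <;> omega
    · exact zero_mem _

lemma Phi_mem (n : ℕ) (a : GentleAlgebra k Q) : ∀ x ∈ FF k Q n, Phi k Q a x ∈ FF k Q n := by
  induction a using gen_induction with
  | hc c =>
    intro x hx
    rw [AlgHom.commutes, Module.algebraMap_end_apply]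
    exact Submodule.smul_mem _ _ hx
  | hg s =>
    intro x hx
    rw [Phi_gen]
    exact act_mem s n n (Or.inl le_rfl) x hx
  | hm a b ha hb =>
    intro x hx
    rw [map_mul, Module.End.mul_apply]
    exact ha _ (hb _ hx)
  | ha a b ha hb =>
    intro x hx
    rw [map_add, LinearMap.add_apply]
    exact add_mem (ha _ hx) (hb _ hx)

lemma FF_bot (hQ : IsGentle Q) : ∃ n, ∀ x ∈ FF k Q n, x = 0 := by
  obtain ⟨N, hN⟩ := hQ.2.2.2.2.2.2.2
  refine ⟨N + 1, fun x hx => ?_⟩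
  by_contra hne
  obtain ⟨⟨w, l⟩, hp⟩ := Finsupp.support_nonempty_iff.2 hne
  obtain ⟨h1, h2⟩ := (Finsupp.mem_supported k x).1 hx hp
  simp only at h1 h2
  have h0 : 0 < l.length := by omega
  refine hN (fun i => l.getD i l[0]) fun i hi => ?_
  have := (List.isChain_iff_getElem.1 h1) i (by omega)
  have hi1 : i < l.length := by omega
  have hi2 : i + 1 < l.length := by omega
  simpa [RR, hi1, hi2] using this

lemma c_nil (hQ : IsGentle Q) (a : GentleAlgebra k Q) (h : ∀ v, epsC k Q v a = 0) :
    IsNilpotent a := by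
  obtain ⟨n, hn⟩ := FF_bot (k := k) hQ
  obtain ⟨u, hu⟩ := c_decL a h
  have hstep : ∀ m, ∀ x ∈ FF k Q m, Phi k Q a x ∈ FF k Q (m + 1) := by
    intro m x hx
    rw [hu, map_sum, LinearMap.sum_apply]
    refine sum_mem fun g _ => ?_
    rw [map_mul, Module.End.mul_apply, Phi_arr]
    exact act_mem _ m (m + 1) (Or.inr ⟨le_rfl, g, rfl⟩) _ (Phi_mem m _ _ hx)
  have hpow : ∀ m, coef k Q (a ^ m) ∈ FF k Q m := by
    intro m
    induction m with
    | zero =>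
      rw [pow_zero, coef, map_one, Module.End.one_apply, xi]
      refine sum_mem fun v _ => ?_
      exact Finsupp.single_mem_supported k 1 ⟨List.isChain_nil, le_rfl⟩
    | succ m ih =>
      rw [pow_succ', coef_mul]
      exact hstep m _ ih
  exact ⟨n, coef_inj (hn _ (hpow n))⟩

open Classical in
/-- Projection to the paths starting with an arrow. -/
noncomputable def c_prj (g : Q.A) : GentleAlgebra k Q →+ GentleAlgebra k Q where
  toFun a := WW k Q ((coef k Q a).filter (fun p => p.2.head? = some g))
  map_zero' := by rw [coef_zero, Finsupp.filter_zero, map_zero]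
  map_add' a b := by rw [coef_add, Finsupp.filter_add, map_add]

variable (k) in
/-- The structure on the gentle algebra. -/
noncomputable def concreteGM (hQ : IsGentle Q) : GM k Q (GentleAlgebra k Q) where
  e := idemOf k Q
  ar := arrOf k Q
  ε := epsC k Q
  prj := c_prj
  idem := c_idem
  orth := c_orth
  src_mul := c_src
  mul_tgt := c_tgt
  relation := c_rel
  ar_ne := by
    intro a h
    have := coef_arr (k := k) a
    rw [h, coef_zero] at this
    have h2 := DFunLike.congr_fun this (Q.src a, [a])
    simp at h2
  eps_e := by
    intro v
    simp [eps_vertex]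
  eps_e_ne := by
    intro v w h
    simp [eps_vertex, Ne.symm h]
  eps_ar := eps_arrow
  nil := c_nil hQ
  decL := c_decL
  decR := c_decR
  indR := by
    classical
    intro u h g
    have h1 := congrArg (coef k Q) h
    rw [coef_zero, coef_sum] at h1
    simp only [coef_mul_arr] at h1
    have h2 := congrArg (Finsupp.filterAddHom (fun p : PX Q => p.2.getLast? = some g)) h1
    rw [map_sum, map_zero] at h2
    apply coef_inj
    rw [coef_mul_arr, ← h2, Finset.sum_eq_single g]
    · have := filter_rho g g (coef k Q (u g))
      rw [if_pos rfl] at this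
      change _ = Finsupp.filter _ _
      convert this.symm
    · intro d _ hd
      have := filter_rho g d (coef k Q (u d))
      rw [if_neg hd.symm] at this
      change Finsupp.filter _ _ = _
      convert this
    · simp
  prj_same := by
    intro g b
    change WW k Q ((coef k Q _).filter _) = _
    rw [coef_arr_mul, filter_act, if_pos rfl, ← coef_arr_mul, WW_coef]
  prj_ne := by
    intro g g' b h
    change WW k Q ((coef k Q _).filter _) = _
    rw [coef_arr_mul, filter_act, if_neg h, map_zero]
  annL := c_annL
  annR := c_annR

end Concrete

/-- The number of isomorphism classes of indecomposable
non-projective Gorenstein projective modules over a gentle algebra equals the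
number of arrows lying on oriented cycles with full relations, i.e.
`Σ_ℓ ℓ · φ_A(0, ℓ)` in terms of the AG-invariant. -/
theorem numIndecNonProjGP_eq_card_ocf_arrows
    (k : Type) [Field k] [IsAlgClosed k] (Q : GentleData) (hQ : IsGentle Q) :
    numIndecNonProjGP k Q = Set.ncard {a : Q.A | OnOCFCycle Q a} ∧
    numIndecNonProjGP k Q =
      ∑ ℓ ∈ Finset.range (Fintype.card Q.A + 1), ℓ * AGzero Q ℓ := by
  have h := card_of_GM hQ (concreteGM k hQ)
  exact ⟨h, h.trans (ncard_ocf hQ)⟩
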